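/- arXiv:2506.10604 — 2 statements merged into one kernel-verified Lean document; each statement's English description precedes it below -/
import Mathlib

section
/- There is a constant C > 0 such that for every k ≥ 13, the antiprism on n = 2k vertices has at most C·n^{15} cycle double covers of size exactly n−1. -/
/-!
Write `a_p = {p, p + 1}` and `b_p = {p, p + 2}` for the edges of the antiprism on `n = 2k` vertices.
Since a cycle has even degree everywhere, it meets all cuts `{a_p, b_{p-1}, b_p}` with the same
parity; call it winding if this parity is odd. Modulo 2, `b_p = ε + a_p + b_{p-1}`, so a
cycle is determined by its winding parity `ε`, its `a`-edges and one value of `b`; alternatively,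
a non-winding cycle is determined by its `b`-edges.

Connectedness shows that a non-winding cycle consists of one run of consecutive `b`-edges closed up
by exactly two `a`-edges (`run_unique`, `numA_not_wind`). In a cover of size `n - 1` with `w` winding
cycles, counting the `2n` incidences with `a`-edges therefore leaves exactly
`2n - 2 (n - 1 - w) = 2 + 2w` for the winding cycles (`sum_numA_wind`). Hence `w > 0`, and since
every cut is crossed six times, `w ≤ 6`: the set `U` of positions of `a`-edges of winding cycles has
at most 14 elements.

If `p ∉ U`, a count of crossings of the cut at `p` shows that no non-winding cycle contains both
`b_{p-1}` and `b_p` (`good_cut`). So every non-winding cycle is either a triangle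
`{p, p + 1, p + 2}` or has all its `b`-edges at or just before positions of `U`. Given 14 positions
covering `U`, the cycles other than triangles thus range over a family of bounded size, each with
multiplicity at most 2, and the multiplicity of each triangle is then forced by the coverage of its
edge `b_p`. This bounds the number of covers by a constant times `n ^ 14`.
-/

open SimpleGraph

attribute [local instance] Classical.propDecidable

/-- A cycle in a graph: a connected, 2-regular subgraph. -/
def IsCycleSubgraph {V : Type*} {G : SimpleGraph V} (C : G.Subgraph) : Prop :=
  C.coe.Connected ∧ ∀ v ∈ C.verts, (C.neighborSet v).ncard = 2

/-- A cycle double cover: a multiset of cycles covering every edge exactly twice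
(counted with multiplicity). -/
def IsCDC {V : Type*} (G : SimpleGraph V) (S : Multiset G.Subgraph) : Prop :=
  (∀ C ∈ S, IsCycleSubgraph C) ∧
  ∀ e ∈ G.edgeSet, S.countP (fun C => e ∈ C.edgeSet) = 2

/-- Graph minor relation (via branch sets). -/
def HasGraphMinor {V : Type*} {W : Type*} (G : SimpleGraph V) (H : SimpleGraph W) : Prop :=
  ∃ f : W → Set V,
    (∀ w, (f w).Nonempty) ∧
    (∀ w, (G.induce (f w)).Connected) ∧
    (Pairwise fun w₁ w₂ => Disjoint (f w₁) (f w₂)) ∧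
    ∀ ⦃w₁ w₂⦄, H.Adj w₁ w₂ → ∃ v₁ ∈ f w₁, ∃ v₂ ∈ f w₂, G.Adj v₁ v₂

/-- Planarity, via Wagner's theorem: no `K₅` minor and no `K_{3,3}` minor. -/
def IsPlanar {V : Type*} (G : SimpleGraph V) : Prop :=
  ¬ HasGraphMinor G (completeGraph (Fin 5)) ∧
  ¬ HasGraphMinor G (completeBipartiteGraph (Fin 3) (Fin 3))

/-- `k`-connectivity: more than `k` vertices, and removing fewer than `k`
vertices leaves a connected graph. -/
def IsKConnected {V : Type*} [Fintype V] (k : ℕ) (G : SimpleGraph V) : Prop :=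
  k < Fintype.card V ∧ ∀ s : Set V, s.ncard < k → (G.induce sᶜ).Connected

/-- A Hamiltonian cycle: a cycle through all vertices. -/
def IsHamCycle {V : Type*} (G : SimpleGraph V) (C : G.Subgraph) : Prop :=
  IsCycleSubgraph C ∧ C.verts = Set.univ

/-- The antiprism on `2k` vertices: the square of the cycle `C_{2k}`. -/
def antiprism (k : ℕ) : SimpleGraph (ZMod (2 * k)) :=
  SimpleGraph.fromRel fun v w => w = v + 1 ∨ w = v + 2

/-! ### Edge indicators and winding -/

/-- Indicator of the edge `{p, p + 1}` in `C`. -/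
noncomputable def al {k : ℕ} (C : (antiprism k).Subgraph) (p : ZMod (2 * k)) : ℕ :=
  if C.Adj p (p + 1) then 1 else 0

/-- Indicator of the edge `{p, p + 2}` in `C`. -/
noncomputable def be {k : ℕ} (C : (antiprism k).Subgraph) (p : ZMod (2 * k)) : ℕ :=
  if C.Adj p (p + 2) then 1 else 0

/-- `C` crosses the cut between `-1, 0` and `1, 2` (hence, if `C` is a cycle, every cut
`{a_p, b_{p-1}, b_p}`) an odd number of times, i.e. it winds around the antiprism. -/
def Wind {k : ℕ} (C : (antiprism k).Subgraph) : Prop :=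
  (al C 0 + be C (0 - 1) + be C 0) % 2 = 1

/-- A non-winding subgraph containing `b_p` but neither `b_{p-1}` nor `b_{p+1}`; for cycles this
characterises the triangles `{p, p + 1, p + 2}`. -/
def Tri {k : ℕ} (C : (antiprism k).Subgraph) : Prop :=
  ¬ Wind C ∧ ∃ p, be C (p - 1) = 0 ∧ be C p = 1 ∧ be C (p + 1) = 0

/-- The number of edges of the form `{p, p + 1}` in `C`. -/
noncomputable def numA {k : ℕ} [NeZero (2 * k)] (C : (antiprism k).Subgraph) : ℕ :=
  ∑ p, al C p

section basic

variable {k : ℕ} (C : (antiprism k).Subgraph) (p : ZMod (2 * k))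

lemma al_le : al C p ≤ 1 := by unfold al; split_ifs <;> simp
lemma be_le : be C p ≤ 1 := by unfold be; split_ifs <;> simp
lemma al_eq_one : al C p = 1 ↔ C.Adj p (p + 1) := by unfold al; split_ifs <;> simp_all
lemma be_eq_one : be C p = 1 ↔ C.Adj p (p + 2) := by unfold be; split_ifs <;> simp_all

end basic

lemma natCast_ne_zero {k : ℕ} (j : ℕ) (h0 : 0 < j) (hj : j < 2 * k) :
    ((j : ℕ) : ZMod (2 * k)) ≠ 0 := by
  intro h
  rw [ZMod.natCast_eq_zero_iff] at h
  exact absurd (Nat.le_of_dvd h0 h) (by omega)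

lemma zmod_induction {n : ℕ} [NeZero n] {P : ZMod n → Prop} (q : ZMod n) (h0 : P q)
    (hs : ∀ p, P p → P (p + 1)) (p : ZMod n) : P p := by
  have key : ∀ m : ℕ, P (q + m) := by
    intro m
    induction m with
    | zero => simpa using h0
    | succ m ih => have := hs _ ih; push_cast; rwa [add_assoc] at this
  have := key (p - q).val
  rwa [ZMod.natCast_zmod_val, add_sub_cancel] at this

lemma antiprism_adj_one {k : ℕ} (hk : 13 ≤ k) (p : ZMod (2 * k)) :
    (antiprism k).Adj p (p + 1) := by
  have := natCast_ne_zero (k := k) 1 (by omega) (by omega)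
  simp_all [antiprism, SimpleGraph.fromRel_adj]

lemma antiprism_adj_two {k : ℕ} (hk : 13 ≤ k) (p : ZMod (2 * k)) :
    (antiprism k).Adj p (p + 2) := by
  have := natCast_ne_zero (k := k) 2 (by omega) (by omega)
  simp_all [antiprism, SimpleGraph.fromRel_adj]

lemma adj_cases {k : ℕ} (C : (antiprism k).Subgraph) {u w : ZMod (2 * k)} (h : C.Adj u w) :
    (w = u + 1 ∧ al C u = 1) ∨ (w = u + 2 ∧ be C u = 1) ∨
    (u = w + 1 ∧ al C w = 1) ∨ (u = w + 2 ∧ be C w = 1) := by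
  have h1 := C.adj_sub h
  rw [antiprism, SimpleGraph.fromRel_adj] at h1
  rcases h1.2 with (h2 | h2) | (h2 | h2)
  · exact Or.inl ⟨h2, by rw [al_eq_one, ← h2]; exact h⟩
  · exact Or.inr (Or.inl ⟨h2, by rw [be_eq_one, ← h2]; exact h⟩)
  · exact Or.inr (Or.inr (Or.inl ⟨h2, by rw [al_eq_one, ← h2]; exact h.symm⟩))
  · exact Or.inr (Or.inr (Or.inr ⟨h2, by rw [be_eq_one, ← h2]; exact h.symm⟩))

/-! ### Structure of single cycles -/

section cycles

variable {k : ℕ} {C : (antiprism k).Subgraph}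

lemma exists_adj (hC : IsCycleSubgraph C) {v : ZMod (2 * k)} (hv : v ∈ C.verts) :
    ∃ w, C.Adj v w := by
  have h := hC.2 v hv
  have : (C.neighborSet v).Nonempty := Set.nonempty_of_ncard_ne_zero (by omega)
  exact this

lemma cycle_ext {C' : (antiprism k).Subgraph} (hC : IsCycleSubgraph C) (hC' : IsCycleSubgraph C')
    (ha : ∀ p, al C p = al C' p) (hb : ∀ p, be C p = be C' p) : C = C' := by
  have hadj : ∀ {D D' : (antiprism k).Subgraph}, (∀ p, al D p = al D' p) →
      (∀ p, be D p = be D' p) → ∀ {u w}, D.Adj u w → D'.Adj u w := by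
    intro D D' ha hb u w h
    rcases adj_cases D h with ⟨rfl, e⟩ | ⟨rfl, e⟩ | ⟨rfl, e⟩ | ⟨rfl, e⟩
    · rw [ha, al_eq_one] at e; exact e
    · rw [hb, be_eq_one] at e; exact e
    · rw [ha, al_eq_one] at e; exact e.symm
    · rw [hb, be_eq_one] at e; exact e.symm
  have ha' := fun p => (ha p).symm
  have hb' := fun p => (hb p).symm
  apply SimpleGraph.Subgraph.ext
  · ext v
    constructor
    · intro hv
      obtain ⟨w, hw⟩ := exists_adj hC hv
      exact (hadj ha hb hw).fst_mem
    · intro hv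
      obtain ⟨w, hw⟩ := exists_adj hC' hv
      exact (hadj ha' hb' hw).fst_mem
  · funext u w
    exact propext ⟨hadj ha hb, hadj ha' hb'⟩

lemma cycle_nonempty (hC : IsCycleSubgraph C) : ∃ p, al C p = 1 ∨ be C p = 1 := by
  obtain ⟨⟨v, hv⟩⟩ := hC.1.nonempty
  obtain ⟨w, hw⟩ := exists_adj hC hv
  rcases adj_cases C hw with h | h | h | h
  exacts [⟨_, Or.inl h.2⟩, ⟨_, Or.inr h.2⟩, ⟨_, Or.inl h.2⟩, ⟨_, Or.inr h.2⟩]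

/-- A vertex set closed under adjacency in a cycle contains the whole cycle. -/
lemma cycle_closed (hC : IsCycleSubgraph C) (X : Set (ZMod (2 * k))) {v : ZMod (2 * k)}
    (hv : v ∈ C.verts) (hvX : v ∈ X)
    (h1 : ∀ u, al C u = 1 → (u ∈ X ↔ u + 1 ∈ X))
    (h2 : ∀ u, be C u = 1 → (u ∈ X ↔ u + 2 ∈ X)) :
    ∀ w ∈ C.verts, w ∈ X := by
  have step : ∀ u w, C.Adj u w → u ∈ X → w ∈ X := by
    intro u w h hu
    rcases adj_cases C h with ⟨rfl, e⟩ | ⟨rfl, e⟩ | ⟨rfl, e⟩ | ⟨rfl, e⟩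
    · exact (h1 _ e).1 hu
    · exact (h2 _ e).1 hu
    · exact (h1 _ e).2 hu
    · exact (h2 _ e).2 hu
  intro w hw
  obtain ⟨q⟩ := hC.1.preconnected ⟨v, hv⟩ ⟨w, hw⟩
  have : ∀ (x y : C.verts), C.coe.Walk x y → x.1 ∈ X → y.1 ∈ X := by
    intro x y q
    induction q with
    | nil => exact id
    | cons h _ ih => exact fun hx => ih (step _ _ h hx)
  exact this _ _ q hvX

/-- Every vertex has degree `0` or `2` in a cycle. -/
lemma degree_eq (hk : 13 ≤ k) (hC : IsCycleSubgraph C) (v : ZMod (2 * k)) :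
    al C v + al C (v - 1) + be C v + be C (v - 2) = 0 ∨
    al C v + al C (v - 1) + be C v + be C (v - 2) = 2 := by
  have n1 := natCast_ne_zero (k := k) 1 (by omega) (by omega)
  have n2 := natCast_ne_zero (k := k) 2 (by omega) (by omega)
  have n3 := natCast_ne_zero (k := k) 3 (by omega) (by omega)
  have n4 := natCast_ne_zero (k := k) 4 (by omega) (by omega)
  push_cast at n1 n2 n3 n4
  have hset : C.neighborSet v =
      (((({v + 1, v - 1, v + 2, v - 2} : Finset (ZMod (2 * k))).filter
        (fun w => C.Adj v w)) : Finset (ZMod (2 * k))) : Set (ZMod (2 * k))) := by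
    ext w
    simp only [SimpleGraph.Subgraph.mem_neighborSet, Finset.coe_filter, Set.mem_ofPred_eq,
      Finset.mem_insert, Finset.mem_singleton]
    constructor
    · intro h
      refine ⟨?_, h⟩
      rcases adj_cases C h with ⟨h, -⟩ | ⟨h, -⟩ | ⟨h, -⟩ | ⟨h, -⟩ <;> simp [h]
    · exact fun h => h.2
  have e1 : al C (v - 1) = if C.Adj v (v - 1) then 1 else 0 := by
    unfold al; rw [sub_add_cancel, C.adj_comm]
  have e2 : be C (v - 2) = if C.Adj v (v - 2) then 1 else 0 := by
    unfold be; rw [sub_add_cancel, C.adj_comm]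
  have hsum : (C.neighborSet v).ncard =
      al C v + al C (v - 1) + be C v + be C (v - 2) := by
    rw [hset, Set.ncard_coe_finset, Finset.card_filter, Finset.sum_insert, Finset.sum_insert,
      Finset.sum_insert, Finset.sum_singleton, e1, e2]
    · unfold al be; ring
    · simp only [Finset.mem_singleton]; intro h; apply n4; linear_combination h
    · simp only [Finset.mem_insert, Finset.mem_singleton]
      rintro (h | h)
      · apply n3; linear_combination -h
      · apply n1; linear_combination h
    · simp only [Finset.mem_insert, Finset.mem_singleton]
      rintro (h | h | h)
      · apply n2; linear_combination h
      · apply n1; linear_combination -h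
      · apply n3; linear_combination h
  rw [← hsum]
  by_cases hv : v ∈ C.verts
  · exact Or.inr (hC.2 v hv)
  · left
    have : C.neighborSet v = ∅ := by
      ext w
      simp only [SimpleGraph.Subgraph.mem_neighborSet, Set.mem_empty_iff_false, iff_false]
      exact fun h => hv h.fst_mem
    rw [this, Set.ncard_empty]

/-- All cuts `{a_p, b_{p-1}, b_p}` are crossed with the same parity by a cycle. -/
lemma cut_parity [NeZero (2 * k)] (hk : 13 ≤ k) (hC : IsCycleSubgraph C) (p : ZMod (2 * k)) :
    (al C p + be C (p - 1) + be C p) % 2 = (al C 0 + be C (0 - 1) + be C 0) % 2 := by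
  refine zmod_induction (P := fun p => (al C p + be C (p - 1) + be C p) % 2 =
    (al C 0 + be C (0 - 1) + be C 0) % 2) 0 rfl ?_ p
  intro p hp
  rw [← hp]
  have h := degree_eq hk hC (p + 1)
  rw [show p + 1 - 1 = p by ring, show p + 1 - 2 = p - 1 by ring] at h
  rw [show p + 1 - 1 = p by ring]
  omega

lemma wind_parity [NeZero (2 * k)] (hk : 13 ≤ k) (hC : IsCycleSubgraph C) (hw : Wind C)
    (p : ZMod (2 * k)) : (al C p + be C (p - 1) + be C p) % 2 = 1 := by
  rw [cut_parity hk hC p]; exact hw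

lemma not_wind_parity [NeZero (2 * k)] (hk : 13 ≤ k) (hC : IsCycleSubgraph C) (hw : ¬ Wind C)
    (p : ZMod (2 * k)) : (al C p + be C (p - 1) + be C p) % 2 = 0 := by
  rw [cut_parity hk hC p]; unfold Wind at hw; omega

/-- A maximal run `b_i, …, b_{i+T}` of `b`-edges of a non-winding cycle closes up at both ends, so
it already contains all `b`-edges, and the only `a`-edges are `a_i` and `a_{i+T+1}`. -/
lemma run_unique [NeZero (2 * k)] (hk : 13 ≤ k) (hC : IsCycleSubgraph C) (hw : ¬ Wind C)
    (i : ZMod (2 * k)) (T : ℕ) (h0 : be C (i - 1) = 0) (h1 : ∀ t ≤ T, be C (i + t) = 1)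
    (h2 : be C (i + T + 1) = 0) :
    (∀ p, be C p = 1 → ∃ t ≤ T, p = i + (t : ℕ)) ∧
    (∀ p, al C p = 1 ↔ p = i ∨ p = i + T + 1) := by
  have hpar := not_wind_parity hk hC hw
  have b0 : be C i = 1 := by simpa using h1 0 (Nat.zero_le _)
  have bT : be C (i + T) = 1 := h1 T le_rfl
  have a0 : al C i = 1 := by have := hpar i; have := al_le C i; omega
  have aT : al C (i + T + 1) = 1 := by
    have := hpar (i + T + 1)
    rw [add_sub_cancel_right] at this
    have := al_le C (i + T + 1)
    omega
  have d0 := degree_eq hk hC i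
  have dT := degree_eq hk hC (i + T + 1 + 1)
  rw [add_sub_cancel_right, show i + T + 1 + 1 - 2 = i + (T : ZMod (2 * k)) by ring] at dT
  set X : Set (ZMod (2 * k)) := {v | ∃ t : ℕ, t ≤ T + 2 ∧ v = i + t} with hX
  have hmem : ∀ t : ℕ, t ≤ T + 2 → i + (t : ZMod (2 * k)) ∈ X := fun t ht => ⟨t, ht, rfl⟩
  have hall : ∀ w ∈ C.verts, w ∈ X := by
    apply cycle_closed hC X (v := i)
    · exact ((al_eq_one C i).1 a0).fst_mem
    · simpa using hmem 0 (Nat.zero_le _)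
    · intro u hu
      constructor
      · rintro ⟨t, ht, rfl⟩
        by_cases ht' : t = T + 2
        · exfalso
          subst ht'
          rw [show i + ((T + 2 : ℕ) : ZMod (2 * k)) = i + T + 1 + 1 by push_cast; ring] at hu
          omega
        · have := hmem (t + 1) (by omega)
          push_cast at this
          rwa [← add_assoc] at this
      · rintro ⟨t, ht, h⟩
        rcases t with _ | t
        · exfalso
          rw [show u = i - 1 by rw [← add_sub_cancel_right u 1, h]; simp] at hu
          omega
        · rw [show u = i + t by push_cast at h; linear_combination h]
          exact hmem t (by omega)
    · intro u hu
      constructor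
      · rintro ⟨t, ht, rfl⟩
        by_cases ht' : t = T + 2
        · exfalso
          subst ht'
          rw [show i + ((T + 2 : ℕ) : ZMod (2 * k)) = i + T + 1 + 1 by push_cast; ring] at hu
          omega
        by_cases ht'' : t = T + 1
        · exfalso
          subst ht''
          rw [show i + ((T + 1 : ℕ) : ZMod (2 * k)) = i + T + 1 by push_cast; ring] at hu
          omega
        · have := hmem (t + 2) (by omega)
          push_cast at this
          rwa [← add_assoc] at this
      · rintro ⟨t, ht, h⟩
        rcases t with _ | _ | t
        · exfalso
          rw [show u = i - 2 by push_cast at h; linear_combination h] at hu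
          omega
        · exfalso
          rw [show u = i - 1 by push_cast at h; linear_combination h] at hu
          omega
        · rw [show u = i + t by push_cast at h; linear_combination h]
          exact hmem t (by omega)
  refine ⟨?_, ?_⟩
  · intro p hp
    obtain ⟨t, ht, rfl⟩ := hall p ((be_eq_one C p).1 hp).fst_mem
    refine ⟨t, ?_, rfl⟩
    by_contra hlt
    obtain rfl | rfl : t = T + 1 ∨ t = T + 2 := by omega
    · rw [show i + ((T + 1 : ℕ) : ZMod (2 * k)) = i + T + 1 by push_cast; ring] at hp
      omega
    · rw [show i + ((T + 2 : ℕ) : ZMod (2 * k)) = i + T + 1 + 1 by push_cast; ring] at hp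
      omega
  · intro p
    constructor
    · intro hp
      obtain ⟨t, ht, rfl⟩ := hall p ((al_eq_one C p).1 hp).fst_mem
      rcases t with _ | t
      · left; simp
      right
      by_cases h3 : t = T
      · subst h3; push_cast; ring
      exfalso
      by_cases h4 : t = T + 1
      · subst h4
        rw [show i + ((T + 1 + 1 : ℕ) : ZMod (2 * k)) = i + T + 1 + 1 by push_cast; ring] at hp
        omega
      have e1 := h1 t (by omega)
      have e2 := h1 (t + 1) (by omega)
      have := hpar (i + ((t + 1 : ℕ) : ZMod (2 * k)))
      rw [show i + ((t + 1 : ℕ) : ZMod (2 * k)) - 1 = i + t by push_cast; ring] at this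
      omega
    · rintro (rfl | rfl)
      exacts [a0, aT]

/-- The set of all edges `{p, p + 2}` is not connected, so a non-winding cycle misses one. -/
lemma exists_be_zero [NeZero (2 * k)] (hk : 13 ≤ k) (hC : IsCycleSubgraph C) (hw : ¬ Wind C) :
    ∃ p, be C p = 0 := by
  by_contra hcon
  push Not at hcon
  have hb : ∀ p, be C p = 1 := fun p => by have := hcon p; have := be_le C p; omega
  have ha : ∀ p, al C p = 0 := fun p => by
    have := not_wind_parity hk hC hw p
    have := hb p; have := hb (p - 1); have := al_le C p; omega
  have h2 : (2 : ℕ) ∣ 2 * k := Dvd.intro _ rfl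
  let φ := ZMod.castHom h2 (ZMod 2)
  have two : φ 2 = 0 := by
    have : φ 2 = (2 : ZMod 2) := by simpa using map_ofNat φ 2
    rw [this]; rfl
  have := cycle_closed hC {v | φ v = 0} (v := 0) ((be_eq_one C 0).1 (hb 0)).fst_mem
    (by simp) (fun u hu => by have := ha u; omega)
    (fun u _ => by simp only [Set.mem_ofPred_eq, map_add, two, add_zero])
    1 ((be_eq_one C 1).1 (hb 1)).fst_mem
  simp at this

lemma exists_run [NeZero (2 * k)] (hk : 13 ≤ k) (hC : IsCycleSubgraph C) (hw : ¬ Wind C) :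
    ∃ (i : ZMod (2 * k)) (T : ℕ), be C (i - 1) = 0 ∧ (∀ t ≤ T, be C (i + t) = 1) ∧
      be C (i + T + 1) = 0 := by
  have hpar := not_wind_parity hk hC hw
  obtain ⟨q, hq⟩ := exists_be_zero hk hC hw
  obtain ⟨i, hi0, hi1⟩ : ∃ i, be C i = 0 ∧ be C (i + 1) ≠ 0 := by
    by_contra hcon
    push Not at hcon
    have hb : ∀ p, be C p = 0 := zmod_induction q hq hcon
    obtain ⟨p, hp | hp⟩ := cycle_nonempty hC
    · have := hpar p
      have := hb p; have := hb (p - 1)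
      omega
    · have := hb p; omega
  have hex : ∃ T : ℕ, be C (i + 1 + T + 1) = 0 := by
    refine ⟨2 * k - 2, ?_⟩
    have : i + 1 + ((2 * k - 2 : ℕ) : ZMod (2 * k)) + 1 = i := by
      have h : (((2 * k - 2) + 2 : ℕ) : ZMod (2 * k)) = 0 := by
        rw [Nat.sub_add_cancel (by omega)]; exact ZMod.natCast_self _
      push_cast at h ⊢
      linear_combination h
    rw [this, hi0]
  refine ⟨i + 1, Nat.find hex, by rwa [add_sub_cancel_right], ?_, Nat.find_spec hex⟩
  intro t ht
  rcases t with _ | t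
  · have := be_le C (i + 1)
    simp only [Nat.cast_zero, add_zero]; omega
  · have h := Nat.find_min hex (m := t) (by omega)
    have := be_le C (i + 1 + t + 1)
    push_cast
    rw [← add_assoc]; omega

/-- Non-winding cycles contain exactly two edges `{p, p + 1}`. -/
lemma numA_not_wind [NeZero (2 * k)] (hk : 13 ≤ k) (hC : IsCycleSubgraph C) (hw : ¬ Wind C) :
    numA C = 2 := by
  obtain ⟨i, T, h0, h1, h2⟩ := exists_run hk hC hw
  have hA := (run_unique hk hC hw i T h0 h1 h2).2
  have hne : i ≠ i + T + 1 := by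
    intro h
    have := h1 0 (Nat.zero_le _)
    rw [Nat.cast_zero, add_zero, h] at this
    omega
  have : numA C = ∑ p, if p ∈ ({i, i + T + 1} : Finset (ZMod (2 * k))) then 1 else 0 := by
    unfold numA
    apply Finset.sum_congr rfl
    intro p _
    have := al_le C p
    have := hA p
    simp only [Finset.mem_insert, Finset.mem_singleton]
    split_ifs with h
    · exact this.2 h
    · have : al C p ≠ 1 := fun h' => h (this.1 h')
      omega
  rw [this, Finset.sum_ite_mem, Finset.univ_inter, Finset.sum_const, Finset.card_pair hne]
  rfl

/-- A triangle is determined by any of its edges `{p, p + 2}`. -/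
lemma tri_unique [NeZero (2 * k)] (hk : 13 ≤ k) {C' : (antiprism k).Subgraph}
    (hC : IsCycleSubgraph C) (hC' : IsCycleSubgraph C') (hT : Tri C) (hT' : Tri C')
    {p : ZMod (2 * k)} (h : be C p = 1) (h' : be C' p = 1) : C = C' := by
  have key : ∀ {D : (antiprism k).Subgraph}, IsCycleSubgraph D → Tri D → be D p = 1 →
      (∀ q, be D q = 1 ↔ q = p) ∧ (∀ q, al D q = 1 ↔ q = p ∨ q = p + 1) := by
    intro D hD hT h
    obtain ⟨hw, i, h0, h1, h2⟩ := hT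
    have hr := run_unique hk hD hw i 0 h0 (by intro t ht; simpa [Nat.le_zero.1 ht] using h1)
      (by simpa using h2)
    have hb : ∀ q, be D q = 1 → q = i := by
      intro q hq
      obtain ⟨t, ht, rfl⟩ := hr.1 q hq
      simp [Nat.le_zero.1 ht]
    obtain rfl := hb p h
    refine ⟨fun q => ⟨hb q, fun hq => hq ▸ h⟩, fun q => ?_⟩
    simpa using hr.2 q
  obtain ⟨k1, k2⟩ := key hC hT h
  obtain ⟨k3, k4⟩ := key hC' hT' h'
  apply cycle_ext hC hC'
  · intro q
    have := (k2 q).trans (k4 q).symm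
    have := al_le C q; have := al_le C' q
    omega
  · intro q
    have := (k1 q).trans (k3 q).symm
    have := be_le C q; have := be_le C' q
    omega

end cycles

/-! ### Encoding cycles by boundedly many positions -/

/-- `C` is controlled by the positions `f`: either it winds and its `a`-edges sit at these
positions, or it does not wind and its `b`-edges sit at, or one before, these positions. -/
def Loc {k : ℕ} (f : Fin 14 → ZMod (2 * k)) (C : (antiprism k).Subgraph) : Prop :=
  (Wind C ∧ ∀ p, al C p = 1 → ∃ j, f j = p) ∨
  (¬ Wind C ∧ ∀ p, be C p = 1 → (∃ j, f j = p) ∨ ∃ j, f j = p + 1)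

/-- Codes for cycles relative to a choice of 14 positions; the size of this finite type does not
depend on `k`. -/
abbrev Code : Type := Prop × Prop × (Fin 14 → Prop) × (Fin 14 → Prop) × (Fin 14 → Prop)

/-- The restriction of a cycle to the neighbourhood of the positions `f`, with its winding parity
and the value at one base edge. -/
def code {k : ℕ} (f : Fin 14 → ZMod (2 * k)) (C : (antiprism k).Subgraph) : Code :=
  (Wind C, be C 0 = 1, fun j => al C (f j) = 1, fun j => be C (f j) = 1,
    fun j => be C (f j - 1) = 1)

lemma code_inj {k : ℕ} [NeZero (2 * k)] (hk : 13 ≤ k) {f : Fin 14 → ZMod (2 * k)}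
    {C C' : (antiprism k).Subgraph}
    (hC : IsCycleSubgraph C) (hC' : IsCycleSubgraph C') (hL : Loc f C) (hL' : Loc f C')
    (h : code f C = code f C') : C = C' := by
  simp only [code, Prod.mk.injEq, funext_iff, eq_iff_iff] at h
  obtain ⟨hw, h0, ha, hb, hb'⟩ := h
  rcases hL with ⟨w, hL⟩ | ⟨w, hL⟩
  · have w' := hw.1 w
    rcases hL' with ⟨-, hL'⟩ | ⟨w'', -⟩
    swap
    · exact absurd w' w''
    have hA : ∀ p, al C p = al C' p := by
      intro p
      have := al_le C p; have := al_le C' p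
      have i1 : al C p = 1 → al C' p = 1 := by
        intro hp; obtain ⟨j, rfl⟩ := hL p hp; exact (ha j).1 hp
      have i2 : al C' p = 1 → al C p = 1 := by
        intro hp; obtain ⟨j, rfl⟩ := hL' p hp; exact (ha j).2 hp
      omega
    -- `b_{p+1} = 1 + a_{p+1} + b_p` modulo 2 recovers the `b`-edges from the `a`-edges and `b_0`.
    refine cycle_ext hC hC' hA (zmod_induction 0 ?_ ?_)
    · have := be_le C 0; have := be_le C' 0; omega
    · intro p hp
      have e1 := wind_parity hk hC w (p + 1)
      have e2 := wind_parity hk hC' w' (p + 1)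
      rw [add_sub_cancel_right] at e1 e2
      have := hA (p + 1); have := be_le C (p + 1); have := be_le C' (p + 1)
      omega
  · have w' := fun h => w (hw.2 h)
    rcases hL' with ⟨w'', -⟩ | ⟨-, hL'⟩
    · exact absurd w'' w'
    have hB : ∀ p, be C p = be C' p := by
      intro p
      have := be_le C p; have := be_le C' p
      have i1 : be C p = 1 → be C' p = 1 := by
        intro hp
        obtain ⟨j, rfl⟩ | ⟨j, hj⟩ := hL p hp
        · exact (hb j).1 hp
        · have := (hb' j).1; rw [hj, add_sub_cancel_right] at this; exact this hp
      have i2 : be C' p = 1 → be C p = 1 := by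
        intro hp
        obtain ⟨j, rfl⟩ | ⟨j, hj⟩ := hL' p hp
        · exact (hb j).2 hp
        · have := (hb' j).2; rw [hj, add_sub_cancel_right] at this; exact this hp
      omega
    refine cycle_ext hC hC' (fun p => ?_) hB
    have := not_wind_parity hk hC w p
    have := not_wind_parity hk hC' w' p
    have := hB p; have := hB (p - 1); have := al_le C p; have := al_le C' p
    omega

/-! ### Cycle double covers -/

section covers

variable {k : ℕ} {S : Multiset (antiprism k).Subgraph}

lemma countP_eq_sum {α : Type*} (S : Multiset α) (P : α → Prop) [DecidablePred P] :
    S.countP P = (S.map fun c => if P c then 1 else 0).sum := by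
  induction S using Multiset.induction with
  | empty => simp
  | cons a S ih => rw [Multiset.countP_cons, Multiset.map_cons, Multiset.sum_cons, ih, add_comm]

lemma countP_al (hk : 13 ≤ k) (hS : IsCDC (antiprism k) S) (p : ZMod (2 * k)) :
    S.countP (fun C => al C p = 1) = 2 := by
  have := hS.2 s(p, p + 1) (antiprism_adj_one hk p)
  simpa only [SimpleGraph.Subgraph.mem_edgeSet, ← al_eq_one] using this

lemma countP_be (hk : 13 ≤ k) (hS : IsCDC (antiprism k) S) (p : ZMod (2 * k)) :
    S.countP (fun C => be C p = 1) = 2 := by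
  have := hS.2 s(p, p + 2) (antiprism_adj_two hk p)
  simpa only [SimpleGraph.Subgraph.mem_edgeSet, ← be_eq_one] using this

lemma sum_al (hk : 13 ≤ k) (hS : IsCDC (antiprism k) S) (p : ZMod (2 * k)) :
    (S.map fun C => al C p).sum = 2 := by
  refine Eq.trans ?_ (countP_al hk hS p)
  rw [countP_eq_sum]
  refine congrArg _ (Multiset.map_congr rfl fun C _ => ?_)
  have := al_le C p
  split_ifs <;> omega

lemma sum_be (hk : 13 ≤ k) (hS : IsCDC (antiprism k) S) (p : ZMod (2 * k)) :
    (S.map fun C => be C p).sum = 2 := by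
  refine Eq.trans ?_ (countP_be hk hS p)
  rw [countP_eq_sum]
  refine congrArg _ (Multiset.map_congr rfl fun C _ => ?_)
  have := be_le C p
  split_ifs <;> omega

lemma sum_numA [NeZero (2 * k)] (S : Multiset (antiprism k).Subgraph) :
    (S.map numA).sum = ∑ p, (S.map fun C => al C p).sum := by
  induction S using Multiset.induction with
  | empty => simp
  | cons a S ih => simp [ih, Finset.sum_add_distrib, numA]

/-- At most six cycles wind, since each crosses a cut of three doubly covered edges. -/
lemma card_wind_le [NeZero (2 * k)] (hk : 13 ≤ k) (hS : IsCDC (antiprism k) S) :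
    Multiset.card (S.filter Wind) ≤ 6 := by
  have h : (S.map fun C => al C 0 + be C (0 - 1) + be C 0).sum = 6 := by
    rw [Multiset.sum_map_add, Multiset.sum_map_add, sum_al hk hS, sum_be hk hS, sum_be hk hS]
  rw [← h, ← Multiset.countP_eq_card_filter, countP_eq_sum]
  apply Multiset.sum_map_le_sum_map
  intro C _
  split_ifs with hw
  · unfold Wind at hw; omega
  · omega

lemma sum_numA_wind [NeZero (2 * k)] (hk : 13 ≤ k) (hS : IsCDC (antiprism k) S)
    (hcard : Multiset.card S = 2 * k - 1) :
    ((S.filter Wind).map numA).sum = 2 + 2 * Multiset.card (S.filter Wind) := by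
  have h1 : (S.map numA).sum = 2 * (2 * k) := by
    rw [sum_numA, Finset.sum_congr rfl (fun p _ => sum_al hk hS p), Finset.sum_const,
      Finset.card_univ, ZMod.card, smul_eq_mul, mul_comm]
  have h2 : ((S.filter fun C => ¬ Wind C).map numA).sum =
      2 * Multiset.card (S.filter fun C => ¬ Wind C) := by
    rw [Multiset.map_congr rfl (g := fun _ => 2), Multiset.map_const', Multiset.sum_replicate,
      smul_eq_mul, mul_comm]
    intro C hC
    rw [Multiset.mem_filter] at hC
    exact numA_not_wind hk (hS.1 C hC.1) hC.2
  have h3 := Multiset.filter_add_not Wind S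
  have h4 := congrArg Multiset.card h3
  have h5 := congrArg (fun M => (Multiset.map numA M).sum) h3
  simp only [Multiset.map_add, Multiset.sum_add, Multiset.card_add] at h4 h5
  omega

/-- If some cycle of the cover winds and no winding cycle uses `a_p`, then no non-winding cycle
uses both `b_{p-1}` and `b_p`: the quantity `[b_{p-1}] + [b_p] - [a_p]` is nonnegative on every
cycle, sums to 2 over the cover, is 1 on winding cycles and 2 on the excluded ones. -/
lemma good_cut [NeZero (2 * k)] (hk : 13 ≤ k) (hS : IsCDC (antiprism k) S)
    {W C : (antiprism k).Subgraph} (hW : W ∈ S) (hWw : Wind W) (hC : C ∈ S) (hCw : ¬ Wind C)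
    (p : ZMod (2 * k)) (hp : ∀ D ∈ S, Wind D → al D p = 0) (h1 : be C (p - 1) = 1)
    (h2 : be C p = 1) : False := by
  have hbal : ∀ D ∈ S, al D p + (be D (p - 1) + be D p - al D p) = be D (p - 1) + be D p := by
    intro D hD
    by_cases hw : Wind D
    · have := hp D hD hw; omega
    · have := not_wind_parity hk (hS.1 D hD) hw p
      have := al_le D p
      omega
  have hsum : (S.map fun D => be D (p - 1) + be D p - al D p).sum = 2 := by
    have e1 : (S.map fun D => al D p + (be D (p - 1) + be D p - al D p)).sum = 4 := by
      rw [Multiset.map_congr rfl hbal, Multiset.sum_map_add, sum_be hk hS, sum_be hk hS]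
    rw [Multiset.sum_map_add, sum_al hk hS] at e1
    omega
  obtain ⟨R, rfl⟩ := Multiset.exists_cons_of_mem hW
  have hCR : C ∈ R := by
    rcases Multiset.mem_cons.1 hC with rfl | h
    · exact absurd hWw hCw
    · exact h
  obtain ⟨R', rfl⟩ := Multiset.exists_cons_of_mem hCR
  simp only [Multiset.map_cons, Multiset.sum_cons] at hsum
  have w1 := wind_parity hk (hS.1 W hW) hWw p
  have w2 := hp W hW hWw
  have c1 := not_wind_parity hk (hS.1 C hC) hCw p
  have := al_le C p
  omega

/-- The positions of the `a`-edges of the winding cycles control all cycles but triangles. -/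
lemma exists_positions [NeZero (2 * k)] (hk : 13 ≤ k) (hS : IsCDC (antiprism k) S)
    (hcard : Multiset.card S = 2 * k - 1) :
    ∃ f : Fin 14 → ZMod (2 * k), ∀ C ∈ S, Tri C ∨ Loc f C := by
  have hle := card_wind_le hk hS
  have hsum := sum_numA_wind hk hS hcard
  obtain ⟨W, hW, hWw⟩ : ∃ W ∈ S, Wind W := by
    by_contra hcon
    push Not at hcon
    rw [Multiset.filter_eq_nil.2 hcon] at hsum
    simp at hsum
  set U : Finset (ZMod (2 * k)) :=
    Finset.univ.filter (fun p => ∃ C ∈ S, Wind C ∧ al C p = 1) with hU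
  have hUcard : U.card ≤ 14 := by
    have : U.card ≤ ((S.filter Wind).map numA).sum := by
      rw [sum_numA, hU, Finset.card_filter]
      apply Finset.sum_le_sum
      intro p _
      split_ifs with h
      · obtain ⟨C, hC, hCw, hCp⟩ := h
        rw [← hCp]
        exact Multiset.single_le_sum (fun _ _ => Nat.zero_le _) _
          (Multiset.mem_map_of_mem _ (Multiset.mem_filter.2 ⟨hC, hCw⟩))
      · exact Nat.zero_le _
    omega
  let f : Fin 14 → ZMod (2 * k) := fun j => U.toList.getD j 0
  have hf : ∀ p ∈ U, ∃ j, f j = p := by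
    intro p hp
    obtain ⟨j, hj, rfl⟩ := List.getElem_of_mem (Finset.mem_toList.2 hp)
    have hj' := hj
    rw [Finset.length_toList] at hj'
    exact ⟨⟨j, by omega⟩, by simp only [f]; exact List.getD_eq_getElem _ _ hj⟩
  refine ⟨f, fun C hC => ?_⟩
  by_cases hw : Wind C
  · exact Or.inr (Or.inl ⟨hw, fun p hp => hf p (by simp [hU]; exact ⟨C, hC, hw, hp⟩)⟩)
  by_cases hT : Tri C
  · exact Or.inl hT
  refine Or.inr (Or.inr ⟨hw, fun p hp => ?_⟩)
  have hcut : ∀ q, be C (q - 1) = 1 → be C q = 1 → q ∈ U := by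
    intro q h1 h2
    by_contra hq
    refine good_cut hk hS hW hWw hC hw q ?_ h1 h2
    intro D hD hDw
    by_contra hne
    have := al_le D q
    exact hq (by simp [hU]; exact ⟨D, hD, hDw, by omega⟩)
  by_cases h1 : be C (p - 1) = 1
  · exact Or.inl (hf p (hcut p h1 hp))
  by_cases h2 : be C (p + 1) = 1
  · exact Or.inr (hf _ (hcut _ (by rwa [add_sub_cancel_right]) h2))
  exfalso
  apply hT
  have := be_le C (p - 1); have := be_le C (p + 1)
  exact ⟨hw, p, by omega, hp, by omega⟩

/-- `S` is described by `(f, μ)`: outside its triangles, all its cycles are controlled by `f`, and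
`μ` records the multiplicity of each code. -/
def Describes (c : (Fin 14 → ZMod (2 * k)) × (Code → Fin 3)) (S : Multiset (antiprism k).Subgraph) :
    Prop :=
  (∀ C ∈ S, Tri C ∨ Loc c.1 C) ∧
  ∀ γ, S.countP (fun C => ¬ Tri C ∧ code c.1 C = γ) = (c.2 γ : ℕ)

lemma exists_describes [NeZero (2 * k)] (hk : 13 ≤ k) (hS : IsCDC (antiprism k) S)
    (hcard : Multiset.card S = 2 * k - 1) : ∃ c, Describes c S := by
  obtain ⟨f, hf⟩ := exists_positions hk hS hcard
  have hle : ∀ γ, S.countP (fun C => ¬ Tri C ∧ code f C = γ) < 3 := by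
    intro γ
    by_cases hex : ∃ C ∈ S, ¬ Tri C ∧ code f C = γ
    · obtain ⟨C, hC, hT, hγ⟩ := hex
      have huniq : ∀ D ∈ S, ¬ Tri D ∧ code f D = γ → D = C := fun D hD h =>
        code_inj hk (hS.1 D hD) (hS.1 C hC) ((hf D hD).resolve_left h.1)
          ((hf C hC).resolve_left hT) (h.2.trans hγ.symm)
      have key : ∀ (P : (antiprism k).Subgraph → Prop) [DecidablePred P], P C →
          S.countP (fun C => ¬ Tri C ∧ code f C = γ) ≤ S.countP P := by
        intro P _ hP
        rw [Multiset.countP_eq_card_filter, Multiset.countP_eq_card_filter]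
        apply Multiset.card_le_card
        rw [Multiset.le_filter]
        refine ⟨Multiset.filter_le _ _, fun D hD => ?_⟩
        rw [Multiset.mem_filter] at hD
        rw [huniq D hD.1 hD.2]; exact hP
      obtain ⟨p, hp | hp⟩ := cycle_nonempty (hS.1 C hC)
      · have := key (fun C => al C p = 1) hp
        rw [countP_al hk hS] at this; omega
      · have := key (fun C => be C p = 1) hp
        rw [countP_be hk hS] at this; omega
    · have : S.countP (fun C => ¬ Tri C ∧ code f C = γ) = 0 := by
        rw [Multiset.countP_eq_zero]
        exact fun C hC h => hex ⟨C, hC, h⟩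
      omega
  exact ⟨(f, fun γ => ⟨_, hle γ⟩), hf, fun γ => rfl⟩

lemma describes_unique [NeZero (2 * k)] (hk : 13 ≤ k) {S' : Multiset (antiprism k).Subgraph}
    (hS : IsCDC (antiprism k) S) (hS' : IsCDC (antiprism k) S')
    {c : (Fin 14 → ZMod (2 * k)) × (Code → Fin 3)} (h : Describes c S) (h' : Describes c S') :
    S = S' := by
  have key : ∀ {R : Multiset (antiprism k).Subgraph} {C : (antiprism k).Subgraph},
      IsCDC (antiprism k) R → Describes c R → IsCycleSubgraph C → ¬ Tri C → Loc c.1 C →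
      R.count C = (c.2 (code c.1 C) : ℕ) := by
    intro R C hR hd hC hT hL
    rw [← hd.2, Multiset.count]
    apply Multiset.countP_congr rfl
    intro D hD
    apply propext
    constructor
    · rintro rfl; exact ⟨hT, rfl⟩
    · rintro ⟨hT', he⟩
      exact (code_inj hk (hR.1 D hD) hC ((hd.1 D hD).resolve_left hT') hL he).symm
  have hnon : ∀ C, ¬ Tri C → S.count C = S'.count C := by
    intro C hT
    by_cases hC : C ∈ S
    · have hc := hS.1 C hC
      have hL := (h.1 C hC).resolve_left hT
      rw [key hS h hc hT hL, key hS' h' hc hT hL]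
    by_cases hC' : C ∈ S'
    · have hc := hS'.1 C hC'
      have hL := (h'.1 C hC').resolve_left hT
      rw [key hS h hc hT hL, key hS' h' hc hT hL]
    rw [Multiset.count_eq_zero_of_notMem hC, Multiset.count_eq_zero_of_notMem hC']
  have hfil : S.filter (fun C => ¬ Tri C) = S'.filter (fun C => ¬ Tri C) := by
    ext C
    rw [Multiset.count_filter, Multiset.count_filter]
    by_cases hT : Tri C
    · simp [hT]
    · simp [hT, hnon C hT]
  -- The multiplicity of a triangle is what the other cycles leave uncovered of its `b`-edge.
  have hcnt : ∀ {R : Multiset (antiprism k).Subgraph} {C : (antiprism k).Subgraph}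
      {p : ZMod (2 * k)}, IsCDC (antiprism k) R → IsCycleSubgraph C → Tri C → be C p = 1 →
      R.count C + (R.filter (fun C => ¬ Tri C)).countP (fun C => be C p = 1) = 2 := by
    intro R C p hR hC hT hp
    have e := countP_be hk hR p
    rw [← Multiset.filter_add_not Tri R, Multiset.countP_add] at e
    have e2 : R.count C = (R.filter Tri).countP (fun C => be C p = 1) := by
      rw [Multiset.countP_filter, Multiset.count]
      apply Multiset.countP_congr rfl
      intro D hD
      apply propext
      constructor
      · rintro rfl; exact ⟨hp, hT⟩
      · rintro ⟨h1, h2⟩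
        exact tri_unique hk hC (hR.1 D hD) hT h2 hp h1
    omega
  ext C
  by_cases hT : Tri C
  · obtain ⟨-, p, -, hp, -⟩ := id hT
    by_cases hc : IsCycleSubgraph C
    · have e1 := hcnt hS hc hT hp
      have e2 := hcnt hS' hc hT hp
      rw [hfil] at e1
      omega
    · rw [Multiset.count_eq_zero_of_notMem (fun hm => hc (hS.1 C hm)),
        Multiset.count_eq_zero_of_notMem (fun hm => hc (hS'.1 C hm))]
  · exact hnon C hT

end covers

/-- There is a constant `C > 0` such that for every `k ≥ 13` the antiprism on `n = 2k`
vertices has at most `C·n^{15}` cycle double covers of size exactly `n - 1`. -/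
theorem statement_10 :
    ∃ C : ℝ, 0 < C ∧ ∀ k : ℕ, 13 ≤ k →
      ({S : Multiset (antiprism k).Subgraph |
          IsCDC (antiprism k) S ∧ Multiset.card S = 2 * k - 1}.ncard : ℝ) ≤
        C * ((2 * k : ℕ) : ℝ) ^ (15 : ℕ) := by
  refine ⟨(Nat.card (Code → Fin 3) : ℝ), by exact_mod_cast Nat.card_pos, ?_⟩
  intro k hk
  have : NeZero (2 * k) := ⟨by omega⟩
  have hex : ∀ S : Multiset (antiprism k).Subgraph, ∃ c,
      (IsCDC (antiprism k) S ∧ Multiset.card S = 2 * k - 1) → Describes c S := by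
    intro S
    by_cases hS : IsCDC (antiprism k) S ∧ Multiset.card S = 2 * k - 1
    · obtain ⟨c, hc⟩ := exists_describes hk hS.1 hS.2
      exact ⟨c, fun _ => hc⟩
    · exact ⟨(fun _ => 0, fun _ => 0), fun h => absurd h hS⟩
  choose F hF using hex
  have hle := Set.ncard_le_ncard_of_injOn
    (s := {S : Multiset (antiprism k).Subgraph |
      IsCDC (antiprism k) S ∧ Multiset.card S = 2 * k - 1}) (t := Set.univ) F
    (fun _ _ => Set.mem_univ _)
    (fun S hS S' hS' he => describes_unique hk hS.1 hS'.1 (hF S hS) (he ▸ hF S' hS'))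
    Set.finite_univ
  rw [Set.ncard_univ, Nat.card_prod, Nat.card_fun (α := Fin 14), Nat.card_zmod, Nat.card_fin] at hle
  have h2 : (2 * k) ^ 14 * Nat.card (Code → Fin 3) ≤
      Nat.card (Code → Fin 3) * (2 * k) ^ 15 := by
    rw [mul_comm]
    exact Nat.mul_le_mul_left _ (Nat.pow_le_pow_right (by omega) (by omega))
  exact_mod_cast hle.trans h2
end

section
/- For every plane triangulation T, c(T) ≤ Σ_{G ∈ 𝒫(T)} c(G), where 𝒫(T) is the set of pieces of the decomposition tree of T obtained by successively splitting T along separating triangles. -/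
/-!
The inequality is proved by induction on the decomposition: if `T[a]` and `T[b]` meet in a triangle
`xyz` and there is no edge between `a \ b` and `b \ a`, then cycle double covers `A` of `T[a]` and
`B` of `T[b]` are turned into a cycle double cover of `T[a ∪ b]` with at most `|A| + |B|` members
(`HasCover.union`). In `A + B` every edge is covered twice, except that the three edges of the
triangle are covered four times; so each of these has to lose two.

* If two members of `A` (or two of `B`) contain all three edges of the triangle, both are equal to
  the triangle, and it is enough to drop them (`exists_drop_triangles`).
* Otherwise some members of `A` can be paired with some members of `B` in such a way that each edge
  of the triangle is common to exactly one pair, and every pair has a common edge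
  (`exists_pairing`). Only the trace of each cycle on the triangle matters here, so this is a finite
  problem, which is solved by evaluation (`pairing_check`).

A pair `(C, D)` with common edge `xy` is replaced by at most two cycles that cover the symmetric
difference of `C` and `D` (`exists_cycles_of_share`). Indeed `C - xy` and `D - xy` are paths from
`x` to `y` that can meet only in `x`, `y`, `z`. If they do not meet in `z`, their union is a
cycle; if they do, splitting both at `z` gives two pairs of paths with common ends, each of which
forms a cycle or is a single edge counted twice, which disappears. The number of cycles does not
grow, and an edge loses two exactly if it is common to the two members of a pair.

The argument takes place inside the fixed graph `T`: a cycle is handled as its edge set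
(`IsCycleIn`), and `HasCover` restates the existence of a small double cover of `T[s]` in these
terms. The last part translates between this and `cdcMin`.
-/

open SimpleGraph

attribute [local instance] Classical.propDecidable

/-- A (plane) triangulation, combinatorially: a maximal planar graph, i.e. a planar graph
on `n ≥ 3` vertices with exactly `3n - 6` edges (equivalently, every face is a triangle). -/
def IsTriangulation {V : Type*} [Fintype V] (G : SimpleGraph V) : Prop :=
  IsPlanar G ∧ 3 ≤ Fintype.card V ∧ G.edgeSet.ncard + 6 = 3 * Fintype.card V

/-- A separating triangle: three pairwise adjacent vertices whose removal disconnects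
the graph. -/
def HasSepTriangle {α : Type*} (H : SimpleGraph α) : Prop :=
  ∃ u v w : α, H.Adj u v ∧ H.Adj v w ∧ H.Adj u w ∧
    ¬ (H.induce {x | x ≠ u ∧ x ≠ v ∧ x ≠ w}).Connected

/-- The minimum size of a cycle double cover of `G` (`⊤` if `G` has none). -/
noncomputable def cdcMin {V : Type*} (G : SimpleGraph V) : ℕ∞ :=
  sInf {n : ℕ∞ | ∃ S : Multiset G.Subgraph, IsCDC G S ∧ (Multiset.card S : ℕ∞) = n}

/-- `IsPieceDecomp T s P` : `P` is the multiset of (vertex sets of) pieces of the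
decomposition of the triangulation `T.induce s` obtained by successively splitting along
separating triangles (retaining a copy of the separating triangle in each part), until no
piece has a separating triangle. -/
inductive IsPieceDecomp {V : Type*} (T : SimpleGraph V) :
    Finset V → Multiset (Finset V) → Prop
  | base (s : Finset V) :
      ¬ HasSepTriangle (T.induce (s : Set V)) → IsPieceDecomp T s {s}
  | split (s a b : Finset V) (P Q : Multiset (Finset V)) :
      a ∪ b = s → a ≠ s → b ≠ s →
      (a ∩ b).card = 3 →
      (∀ u ∈ a ∩ b, ∀ v ∈ a ∩ b, u ≠ v → T.Adj u v) →
      (∀ u ∈ a, ∀ v ∈ b, T.Adj u v → u ∈ b ∨ v ∈ a) →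
      IsPieceDecomp T a P → IsPieceDecomp T b Q →
      IsPieceDecomp T s (P + Q)


/-! ### Pairing the members of two covers -/

/-- The trace of a cycle on a triangle: which of its three edges the cycle contains. -/
abbrev EdgeType := Bool × Bool × Bool

/-- Equality of edge types, as a Boolean function that the kernel can evaluate. The equality test
found by instance search is the classical one, which does not reduce. -/
def sameType (x y : EdgeType) : Bool :=
  !(x.1 ^^ y.1) && !(x.2.1 ^^ y.2.1) && !(x.2.2 ^^ y.2.2)

/-- Boolean test for `l ≤ m` as multisets. -/
def fitsIn (l m : List EdgeType) : Bool :=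
  l.all fun x => Nat.ble (l.countP (sameType x)) (m.countP (sameType x))

/-- The edge types of cycles that contain an edge of the triangle. -/
def allTypes : List EdgeType :=
  [(true, true, true), (true, true, false), (true, false, true), (false, true, true),
    (true, false, false), (false, true, false), (false, false, true)]

/-- The pairs of edge types whose common edges are exactly those in `m`. -/
def pairsMeeting (m : EdgeType) : List (EdgeType × EdgeType) :=
  (allTypes ×ˢ allTypes).filter fun p =>
    sameType (p.1.1 && p.2.1, p.1.2.1 && p.2.2.1, p.1.2.2 && p.2.2.2) m

/-- All lists of pairs of edge types such that every pair has a common edge and each edge of the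
triangle is common to exactly one pair, up to order: the sets of common edges form a partition of
the three edges of the triangle. -/
def pairings : List (List (EdgeType × EdgeType)) :=
  (pairsMeeting (true, true, true)).map (fun x => [x]) ++
  (pairsMeeting (true, true, false) ×ˢ pairsMeeting (false, false, true)).map
    (fun x => [x.1, x.2]) ++
  (pairsMeeting (true, false, true) ×ˢ pairsMeeting (false, true, false)).map
    (fun x => [x.1, x.2]) ++
  (pairsMeeting (false, true, true) ×ˢ pairsMeeting (true, false, false)).map
    (fun x => [x.1, x.2]) ++
  (pairsMeeting (true, false, false) ×ˢ pairsMeeting (false, true, false) ×ˢ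
    pairsMeeting (false, false, true)).map (fun x => [x.1, x.2.1, x.2.2])

/-- The edge types in a double cover of the triangle with `n.1` members containing all three edges,
and `n.2.1`, `n.2.2.1`, `n.2.2.2` members containing exactly the first and second, first and third,
second and third edge. The numbers of members containing a single edge are then determined. -/
def family (n : ℕ × ℕ × ℕ × ℕ) : List EdgeType :=
  List.replicate n.1 (true, true, true) ++ List.replicate n.2.1 (true, true, false) ++
  List.replicate n.2.2.1 (true, false, true) ++ List.replicate n.2.2.2 (false, true, true) ++
  List.replicate (2 - (n.1 + n.2.1 + n.2.2.1)) (true, false, false) ++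
  List.replicate (2 - (n.1 + n.2.1 + n.2.2.2)) (false, true, false) ++
  List.replicate (2 - (n.1 + n.2.2.1 + n.2.2.2)) (false, false, true)

/-- The parameters of `family` for which no edge is covered more than twice and at most one member
contains all three edges. -/
def familyParams : List (ℕ × ℕ × ℕ × ℕ) :=
  (List.range 2 ×ˢ List.range 3 ×ˢ List.range 3 ×ˢ List.range 3).filter fun n =>
    Nat.ble (n.1 + n.2.1 + n.2.2.1) 2 && Nat.ble (n.1 + n.2.1 + n.2.2.2) 2 &&
      Nat.ble (n.1 + n.2.2.1 + n.2.2.2) 2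

section
-- `decide` needs an equality test on `Bool` that reduces; this one takes priority over the
-- classical instance.
attribute [local instance] instDecidableEqBool

/-- Any two double covers of the triangle, each with at most one member containing all three edges,
can be matched by one of the `pairings`. -/
theorem pairing_check :
    (familyParams.all fun m => familyParams.all fun n => pairings.any fun c =>
      fitsIn (c.map Prod.fst) (family m) && fitsIn (c.map Prod.snd) (family n)) = true := by
  decide +kernel

/-- In each of the `pairings`, every edge is common to exactly one pair, and every pair has a common
edge. -/
theorem pairings_check :
    (pairings.all fun c =>
      Nat.beq (c.countP fun x => x.1.1 && x.2.1) 1 &&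
      Nat.beq (c.countP fun x => x.1.2.1 && x.2.2.1) 1 &&
      Nat.beq (c.countP fun x => x.1.2.2 && x.2.2.2) 1 &&
      c.all fun x => x.1.1 && x.2.1 || x.1.2.1 && x.2.2.1 || x.1.2.2 && x.2.2.2) = true := by
  decide +kernel
end

theorem sameType_iff (x y : EdgeType) : sameType x y = true ↔ y = x := by
  obtain ⟨a, b, c⟩ := x
  obtain ⟨d, e, f⟩ := y
  cases a <;> cases b <;> cases c <;> cases d <;> cases e <;> cases f <;> simp [sameType]

theorem countP_sameType (x : EdgeType) (l : List EdgeType) :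
    l.countP (sameType x) = (l : Multiset EdgeType).count x := by
  rw [Multiset.count, Multiset.coe_countP]
  apply List.countP_congr
  intro y _
  rw [sameType_iff, decide_eq_true_iff, eq_comm]

theorem le_of_fitsIn {l m : List EdgeType} (h : fitsIn l m = true) :
    (l : Multiset EdgeType) ≤ (m : Multiset EdgeType) := by
  rw [Multiset.le_iff_count]
  intro x
  by_cases hx : x ∈ l
  · have := List.all_eq_true.1 h x hx
    rw [countP_sameType, countP_sameType] at this
    exact Nat.le_of_ble_eq_true this
  · rw [Multiset.count_eq_zero_of_notMem (by simpa using hx)]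
    exact Nat.zero_le _

/-- The types other than `(false, false, false)` that occur in a multiset covering each edge twice
form one of the families. -/
theorem family_le (M : Multiset EdgeType) (h1 : M.countP (fun x => x.1 = true) = 2)
    (h2 : M.countP (fun x => x.2.1 = true) = 2) (h3 : M.countP (fun x => x.2.2 = true) = 2)
    (h : M.count (true, true, true) < 2) :
    ∃ n ∈ familyParams, (family n : Multiset EdgeType) ≤ M := by
  have e1 : ∀ M : Multiset EdgeType, M.countP (fun x => x.1 = true) =
      M.count (true, true, true) + M.count (true, true, false) + M.count (true, false, true) +
        M.count (true, false, false) := by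
    intro M
    induction M using Multiset.induction_on with
    | empty => simp
    | cons x M ih =>
      obtain ⟨a, b, c⟩ := x
      cases a <;> cases b <;> cases c <;> simp [ih] <;> omega
  have e2 : ∀ M : Multiset EdgeType, M.countP (fun x => x.2.1 = true) =
      M.count (true, true, true) + M.count (true, true, false) + M.count (false, true, true) +
        M.count (false, true, false) := by
    intro M
    induction M using Multiset.induction_on with
    | empty => simp
    | cons x M ih =>
      obtain ⟨a, b, c⟩ := x
      cases a <;> cases b <;> cases c <;> simp [ih] <;> omega
  have e3 : ∀ M : Multiset EdgeType, M.countP (fun x => x.2.2 = true) =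
      M.count (true, true, true) + M.count (true, false, true) + M.count (false, true, true) +
        M.count (false, false, true) := by
    intro M
    induction M using Multiset.induction_on with
    | empty => simp
    | cons x M ih =>
      obtain ⟨a, b, c⟩ := x
      cases a <;> cases b <;> cases c <;> simp [ih] <;> omega
  rw [e1] at h1
  rw [e2] at h2
  rw [e3] at h3
  refine ⟨(M.count (true, true, true), M.count (true, true, false), M.count (true, false, true),
    M.count (false, true, true)), ?_, ?_⟩
  · simp only [familyParams, List.mem_filter, List.mem_product, List.mem_range, Bool.and_eq_true,
      Nat.ble_eq]
    omega
  · rw [Multiset.le_iff_count]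
    rintro ⟨_ | _, _ | _, _ | _⟩ <;> simp [family, List.count_replicate] <;> omega

/-- A list of pairs of types whose components occur in `A` and `B` comes from a list of pairs of
members of `A` and `B`, each used at most as often as it occurs. -/
theorem exists_lift {α β : Type*} (t : α → β) (c : List (β × β)) (A B : Multiset α)
    (hA : ((c.map Prod.fst : List β) : Multiset β) ≤ A.map t)
    (hB : ((c.map Prod.snd : List β) : Multiset β) ≤ B.map t) :
    ∃ (Z : List (α × α)) (A' B' : Multiset α), Z.map (Prod.map t t) = c ∧
      A = ((Z.map Prod.fst : List α) : Multiset α) + A' ∧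
      B = ((Z.map Prod.snd : List α) : Multiset α) + B' := by
  induction c generalizing A B with
  | nil => exact ⟨[], A, B, rfl, by simp, by simp⟩
  | cons x c ih =>
    simp only [List.map_cons, ← Multiset.cons_coe] at hA hB
    obtain ⟨a, ha, hax⟩ := Multiset.mem_map.1
      (Multiset.mem_of_le hA (Multiset.mem_cons_self _ _))
    obtain ⟨b, hb, hbx⟩ := Multiset.mem_map.1
      (Multiset.mem_of_le hB (Multiset.mem_cons_self _ _))
    obtain ⟨A₁, rfl⟩ := Multiset.exists_cons_of_mem ha
    obtain ⟨B₁, rfl⟩ := Multiset.exists_cons_of_mem hb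
    rw [Multiset.map_cons, hax, Multiset.cons_le_cons_iff] at hA
    rw [Multiset.map_cons, hbx, Multiset.cons_le_cons_iff] at hB
    obtain ⟨Z, A', B', hZ, h1, h2⟩ := ih A₁ B₁ hA hB
    refine ⟨(a, b) :: Z, A', B', ?_, ?_, ?_⟩
    · simp [hZ, hax, hbx]
    · simp [h1, ← Multiset.cons_coe, Multiset.cons_add]
    · simp [h2, ← Multiset.cons_coe, Multiset.cons_add]

/-- If each of three properties holds for exactly two members of `A` and two of `B`, and at most one
member on each side has all three, then some members of `A` can be paired with members of `B` so
that each property is shared by exactly one pair and every pair shares a property. -/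
theorem exists_pairing {α : Type*} (p₁ p₂ p₃ : α → Prop) (A B : Multiset α)
    (hA1 : A.countP p₁ = 2) (hA2 : A.countP p₂ = 2) (hA3 : A.countP p₃ = 2)
    (hB1 : B.countP p₁ = 2) (hB2 : B.countP p₂ = 2) (hB3 : B.countP p₃ = 2)
    (hA : A.countP (fun x => p₁ x ∧ p₂ x ∧ p₃ x) < 2)
    (hB : B.countP (fun x => p₁ x ∧ p₂ x ∧ p₃ x) < 2) :
    ∃ (Z : List (α × α)) (A' B' : Multiset α),
      A = ((Z.map Prod.fst : List α) : Multiset α) + A' ∧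
      B = ((Z.map Prod.snd : List α) : Multiset α) + B' ∧
      Z.countP (fun z => p₁ z.1 ∧ p₁ z.2) = 1 ∧
      Z.countP (fun z => p₂ z.1 ∧ p₂ z.2) = 1 ∧
      Z.countP (fun z => p₃ z.1 ∧ p₃ z.2) = 1 ∧
      ∀ z ∈ Z, p₁ z.1 ∧ p₁ z.2 ∨ p₂ z.1 ∧ p₂ z.2 ∨ p₃ z.1 ∧ p₃ z.2 := by
  let t : α → EdgeType := fun x => (decide (p₁ x), decide (p₂ x), decide (p₃ x))
  have key : ∀ S : Multiset α, S.countP p₁ = 2 → S.countP p₂ = 2 → S.countP p₃ = 2 →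
      S.countP (fun x => p₁ x ∧ p₂ x ∧ p₃ x) < 2 →
      ∃ n ∈ familyParams, (family n : Multiset EdgeType) ≤ S.map t := by
    intro S h1 h2 h3 h
    apply family_le
    · rw [Multiset.countP_map, ← Multiset.countP_eq_card_filter]; simpa [t] using h1
    · rw [Multiset.countP_map, ← Multiset.countP_eq_card_filter]; simpa [t] using h2
    · rw [Multiset.countP_map, ← Multiset.countP_eq_card_filter]; simpa [t] using h3
    · rw [Multiset.count, Multiset.countP_map, ← Multiset.countP_eq_card_filter]
      simpa [t, eq_comm] using h
  obtain ⟨m, hm, hmA⟩ := key A hA1 hA2 hA3 hA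
  obtain ⟨n, hn, hnB⟩ := key B hB1 hB2 hB3 hB
  obtain ⟨c, hc, hfit⟩ := List.any_eq_true.1
    (List.all_eq_true.1 (List.all_eq_true.1 pairing_check m hm) n hn)
  rw [Bool.and_eq_true] at hfit
  obtain ⟨Z, A', B', hZ, hZA, hZB⟩ := exists_lift t c A B
    ((le_of_fitsIn hfit.1).trans hmA) ((le_of_fitsIn hfit.2).trans hnB)
  have hspec := List.all_eq_true.1 pairings_check c hc
  simp only [Bool.and_eq_true, Nat.beq_eq, List.all_eq_true, ← hZ, List.countP_map,
    Bool.or_eq_true] at hspec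
  obtain ⟨⟨⟨h1, h2⟩, h3⟩, h4⟩ := hspec
  refine ⟨Z, A', B', hZA, hZB, ?_, ?_, ?_, ?_⟩
  · rw [← h1]; apply List.countP_congr; simp [t]
  · rw [← h2]; apply List.countP_congr; simp [t]
  · rw [← h3]; apply List.countP_congr; simp [t]
  · intro z hz
    have := h4 _ (List.mem_map_of_mem hz)
    simpa [t, or_assoc] using this

/-! ### Cycles as edge sets -/

/-- `E` is the edge set of a cycle of `T` all of whose vertices lie in `s`. -/
def IsCycleIn {V : Type*} (T : SimpleGraph V) (s : Finset V) (E : Set (Sym2 V)) : Prop :=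
  ∃ (u : V) (p : T.Walk u u), p.IsCycle ∧ (∀ v ∈ p.support, v ∈ s) ∧ E = {e | e ∈ p.edges}

/-- The number of members of `S` that contain the edge `e`. -/
noncomputable def edgeMult {V : Type*} (S : Multiset (Set (Sym2 V))) (e : Sym2 V) : ℕ :=
  S.countP fun E => e ∈ E

theorem IsCycleIn.mono {V : Type*} {T : SimpleGraph V} {s t : Finset V} {E : Set (Sym2 V)}
    (h : IsCycleIn T s E) (hst : s ⊆ t) : IsCycleIn T t E := by
  obtain ⟨u, p, hp, hs, rfl⟩ := h
  exact ⟨u, p, hp, fun v hv => hst (hs v hv), rfl⟩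

theorem IsCycleIn.mem_of_mem {V : Type*} {T : SimpleGraph V} {s : Finset V} {E : Set (Sym2 V)}
    (h : IsCycleIn T s E) {e : Sym2 V} (he : e ∈ E) {v : V} (hv : v ∈ e) : v ∈ s := by
  obtain ⟨u, p, hp, hs, rfl⟩ := h
  exact hs v (p.mem_support_of_mem_edges he hv)

/-- A path containing the edge between its ends consists of that edge. -/
theorem edges_eq_of_isPath {V : Type*} {T : SimpleGraph V} {u v : V} {p : T.Walk u v}
    (hp : p.IsPath) (h : s(u, v) ∈ p.edges) : p.edges = [s(u, v)] := by
  cases p with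
  | nil => simp at h
  | @cons _ w _ hadj q =>
    rw [Walk.cons_isPath_iff] at hp
    rw [Walk.edges_cons, List.mem_cons] at h
    rcases h with h | h
    · have hw : w = v := by
        rcases Sym2.eq_iff.1 h with h | h
        · exact h.2.symm
        · exact (hadj.ne h.1).elim
      subst hw
      rw [Walk.isPath_iff_nil] at hp
      rw [hp.1.eq_nil]
      simp
    · exact (hp.2 (q.fst_mem_support_of_mem_edges h)).elim

/-- Removing an edge `xy` from a cycle leaves a path from `x` to `y`. -/
theorem IsCycleIn.exists_path {V : Type*} {T : SimpleGraph V} {s : Finset V} {E : Set (Sym2 V)}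
    (h : IsCycleIn T s E) {x y : V} (hxy : s(x, y) ∈ E) :
    ∃ p : T.Walk x y, p.IsPath ∧ (∀ v ∈ p.support, v ∈ s) ∧ s(x, y) ∉ p.edges ∧
      ∀ e, e ∈ E ↔ e = s(x, y) ∨ e ∈ p.edges := by
  obtain ⟨u, c, hc, hs, rfl⟩ := h
  simp only [Set.mem_ofPred_eq] at hxy ⊢
  have hx : x ∈ c.support := c.fst_mem_support_of_mem_edges hxy
  have hc' : (c.rotate x hx).IsCycle := hc.rotate hx
  have hedge : ∀ e, e ∈ c.edges ↔ e ∈ (c.rotate x hx).edges :=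
    fun e => ((c.rotate_edges x hx).mem_iff).symm
  have hs' : ∀ v ∈ (c.rotate x hx).support, v ∈ s := by
    intro v hv
    exact hs v ((c.mem_support_rotate_iff x hx).1 hv)
  rw [hedge] at hxy
  simp only [hedge]
  clear hedge hs hc
  generalize c.rotate x hx = c' at *
  cases c' with
  | nil => simp at hxy
  | @cons _ w _ hadj q =>
    rw [Walk.cons_isCycle_iff] at hc'
    obtain ⟨hq, hnot⟩ := hc'
    rw [Walk.edges_cons, List.mem_cons] at hxy
    by_cases hwy : w = y
    · subst hwy
      refine ⟨q.reverse, hq.reverse, ?_, ?_, ?_⟩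
      · intro v hv
        exact hs' v (by simp at hv; simp [hv])
      · simpa using hnot
      · simp
    · have hne : s(x, y) ≠ s(x, w) := by
        intro h
        rcases Sym2.eq_iff.1 h with h | h
        · exact hwy h.2.symm
        · exact hadj.ne h.1
      have hxq : s(x, y) ∈ q.reverse.edges := by
        simpa using hxy.resolve_left hne
      have hqe : ∀ e, e ∈ q.edges ↔ e ∈ q.reverse.edges := by simp
      have hqs : ∀ v, v ∈ q.support ↔ v ∈ q.reverse.support := by simp
      have hqr := hq.reverse
      simp only [Walk.edges_cons, Walk.support_cons, List.mem_cons, hqe, hqs] at hs' ⊢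
      clear hqe hqs hnot hxy hq
      generalize q.reverse = r at *
      cases r with
      | nil => simp at hxq
      | @cons _ y' _ hadj' r =>
        rw [Walk.cons_isPath_iff] at hqr
        rw [Walk.edges_cons, List.mem_cons] at hxq
        have hy : y' = y := by
          rcases hxq with h | h
          · rcases Sym2.eq_iff.1 h with h | h
            · exact h.2.symm
            · exact (hadj'.ne h.1).elim
          · exact (hqr.2 (r.fst_mem_support_of_mem_edges h)).elim
        subst hy
        refine ⟨Walk.cons hadj r.reverse, ?_, ?_, ?_, ?_⟩
        · rw [Walk.cons_isPath_iff]
          exact ⟨hqr.1.reverse, by simpa using hqr.2⟩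
        · intro v hv
          apply hs'
          simp at hv ⊢
          tauto
        · simp only [Walk.edges_cons, List.mem_cons, not_or]
          refine ⟨hne, fun h => hqr.2 (r.fst_mem_support_of_mem_edges (by simpa using h))⟩
        · intro e
          simp
          tauto

/-- Two paths with the same ends and no other common vertex form a cycle, unless both are the single
edge `uv`; in that case the symmetric difference is empty and no cycle is needed. -/
theorem exists_cycle_of_paths {V : Type*} {T : SimpleGraph V} {a b : Finset V} {u v : V}
    {p q : T.Walk u v} (hp : p.IsPath) (hq : q.IsPath) (huv : u ≠ v)
    (hpa : ∀ w ∈ p.support, w ∈ a) (hqb : ∀ w ∈ q.support, w ∈ b)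
    (hpq : ∀ w ∈ p.support, w ∈ q.support → w = u ∨ w = v) :
    ∃ S : Multiset (Set (Sym2 V)), S.card ≤ 1 ∧ (∀ E ∈ S, IsCycleIn T (a ∪ b) E) ∧
      ∀ e, edgeMult S e + 2 * (if e ∈ p.edges ∧ e ∈ q.edges then 1 else 0) =
        (if e ∈ p.edges then 1 else 0) + (if e ∈ q.edges then 1 else 0) := by
  have hshare : ∀ e, e ∈ p.edges → e ∈ q.edges → e = s(u, v) := by
    intro e
    induction e with
    | h x y =>
      intro h1 h2
      have hne := (p.adj_of_mem_edges h1).ne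
      rcases hpq x (p.fst_mem_support_of_mem_edges h1) (q.fst_mem_support_of_mem_edges h2)
        with rfl | rfl <;>
      rcases hpq y (p.snd_mem_support_of_mem_edges h1) (q.snd_mem_support_of_mem_edges h2)
        with rfl | rfl
      · exact (hne rfl).elim
      · rfl
      · exact Sym2.eq_swap
      · exact (hne rfl).elim
  by_cases h : s(u, v) ∈ p.edges ∧ s(u, v) ∈ q.edges
  · refine ⟨0, by simp, by simp, ?_⟩
    intro e
    rw [edges_eq_of_isPath hp h.1, edges_eq_of_isPath hq h.2]
    by_cases he : e = s(u, v) <;> simp [edgeMult, he]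
  · have hdisj : ∀ e, e ∈ p.edges → e ∉ q.edges := by
      intro e h1 h2
      have := hshare e h1 h2
      subst this
      exact h ⟨h1, h2⟩
    have hlen : 1 < p.length ∨ 1 < q.reverse.length := by
      by_contra hcon
      push Not at hcon
      apply h
      have one : ∀ r : T.Walk u v, r.length ≤ 1 → s(u, v) ∈ r.edges := by
        intro r hr
        cases r with
        | nil => exact (huv rfl).elim
        | cons hadj r' =>
          cases r' with
          | nil => simp
          | cons _ _ => simp at hr
      exact ⟨one p hcon.1, one q (by simpa using hcon.2)⟩
    have hcyc : (p.append q.reverse).IsCycle := by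
      refine hp.isCycle_append hq.reverse ?_ hlen
      intro w h1 h2
      have hw1 := List.mem_of_mem_tail h1
      have hw2 := List.mem_of_mem_tail h2
      rcases hpq w hw1 (by simpa using hw2) with rfl | rfl
      · have := hp.support_nodup
        rw [← Walk.cons_tail_support] at this
        exact (List.nodup_cons.1 this).1 h1
      · have := hq.reverse.support_nodup
        rw [← Walk.cons_tail_support] at this
        exact (List.nodup_cons.1 this).1 h2
    refine ⟨{{e | e ∈ (p.append q.reverse).edges}}, by simp, ?_, ?_⟩
    · intro E hE
      rw [Multiset.mem_singleton] at hE
      refine ⟨u, _, hcyc, ?_, hE⟩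
      intro w hw
      rw [Walk.mem_support_append_iff] at hw
      rw [Finset.mem_union]
      exact hw.imp (hpa w) (fun h => hqb w (by simpa using h))
    · intro e
      have := hdisj e
      by_cases h1 : e ∈ p.edges <;> by_cases h2 : e ∈ q.edges <;>
        simp_all [edgeMult, ← Multiset.cons_zero]

/-- Splitting a path at one of its vertices. -/
theorem exists_split {V : Type*} {T : SimpleGraph V} {x y z : V} {p : T.Walk x y}
    (hp : p.IsPath) (hz : z ∈ p.support) :
    ∃ (p₁ : T.Walk x z) (p₂ : T.Walk z y), p₁.IsPath ∧ p₂.IsPath ∧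
      (∀ w ∈ p₁.support, w ∈ p₂.support → w = z) ∧
      (∀ w, w ∈ p.support ↔ w ∈ p₁.support ∨ w ∈ p₂.support) ∧
      ∀ e, e ∈ p.edges ↔ e ∈ p₁.edges ∨ e ∈ p₂.edges := by
  have hspec := p.take_spec hz
  refine ⟨p.takeUntil z hz, p.dropUntil z hz, hp.takeUntil hz, hp.dropUntil hz, ?_, ?_, ?_⟩
  · intro w h1 h2
    by_contra hne
    have hnd := hp.support_nodup
    rw [← hspec, Walk.support_append, List.nodup_append'] at hnd
    rw [← Walk.cons_tail_support, List.mem_cons] at h2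
    exact hnd.2.2 h1 (h2.resolve_left hne)
  · intro w
    rw [← Walk.mem_support_append_iff, hspec]
  · intro e
    rw [← List.mem_append, ← Walk.edges_append, hspec]

/-- The symmetric difference of two cycles that share the edge `xy` and lie in vertex sets meeting
only in `x`, `y`, `z` is a union of at most two edge-disjoint cycles. -/
theorem exists_cycles_of_share {V : Type*} {T : SimpleGraph V} {a b : Finset V}
    {C D : Set (Sym2 V)} (hC : IsCycleIn T a C) (hD : IsCycleIn T b D) {x y z : V}
    (hab : ∀ w ∈ a, w ∈ b → w = x ∨ w = y ∨ w = z) (hzx : z ≠ x) (hzy : z ≠ y)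
    (hxyC : s(x, y) ∈ C) (hxyD : s(x, y) ∈ D) :
    ∃ S : Multiset (Set (Sym2 V)), S.card ≤ 2 ∧ (∀ E ∈ S, IsCycleIn T (a ∪ b) E) ∧
      ∀ e, edgeMult S e + 2 * (if e ∈ C ∧ e ∈ D then 1 else 0) =
        (if e ∈ C then 1 else 0) + (if e ∈ D then 1 else 0) := by
  have hxy : x ≠ y := by
    obtain ⟨_, c, _, _, rfl⟩ := hC
    exact (c.adj_of_mem_edges hxyC).ne
  obtain ⟨p, hp, hpa, hpxy, hpC⟩ := hC.exists_path hxyC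
  obtain ⟨q, hq, hqb, hqxy, hqD⟩ := hD.exists_path hxyD
  have hfin : ∀ S : Multiset (Set (Sym2 V)),
      (∀ e, edgeMult S e + 2 * (if e ∈ p.edges ∧ e ∈ q.edges then 1 else 0) =
        (if e ∈ p.edges then 1 else 0) + (if e ∈ q.edges then 1 else 0)) →
      ∀ e, edgeMult S e + 2 * (if e ∈ C ∧ e ∈ D then 1 else 0) =
        (if e ∈ C then 1 else 0) + (if e ∈ D then 1 else 0) := by
    intro S hS e
    have := hS e
    rw [hpC, hqD]
    by_cases he : e = s(x, y)
    · subst he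
      simp_all
    · simpa [he] using this
  by_cases hz : z ∈ p.support ∧ z ∈ q.support
  · obtain ⟨hzp, hzq⟩ := hz
    obtain ⟨p₁, p₂, hp₁, hp₂, hpz, hps, hpe⟩ := exists_split hp hzp
    obtain ⟨q₁, q₂, hq₁, hq₂, hqz, hqs, hqe⟩ := exists_split hq hzq
    have hyp : y ∉ p₁.support := fun h => hzy (hpz y h p₂.end_mem_support).symm
    have hyq : y ∉ q₁.support := fun h => hzy (hqz y h q₂.end_mem_support).symm
    have hxp : x ∉ p₂.support := fun h => hzx (hpz x p₁.start_mem_support h).symm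
    have hxq : x ∉ q₂.support := fun h => hzx (hqz x q₁.start_mem_support h).symm
    have hmeet : ∀ w ∈ p.support, w ∈ q.support → w = x ∨ w = y ∨ w = z :=
      fun w h1 h2 => hab w (hpa w h1) (hqb w h2)
    obtain ⟨S₁, hc₁, hS₁, hm₁⟩ := exists_cycle_of_paths (a := a) (b := b) hp₁ hq₁ hzx.symm
      (fun w hw => hpa w ((hps w).2 (Or.inl hw))) (fun w hw => hqb w ((hqs w).2 (Or.inl hw)))
      (fun w h1 h2 => by
        rcases hmeet w ((hps w).2 (Or.inl h1)) ((hqs w).2 (Or.inl h2)) with rfl | rfl | rfl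
        · exact Or.inl rfl
        · exact (hyp h1).elim
        · exact Or.inr rfl)
    obtain ⟨S₂, hc₂, hS₂, hm₂⟩ := exists_cycle_of_paths (a := a) (b := b) hp₂ hq₂ hzy
      (fun w hw => hpa w ((hps w).2 (Or.inr hw))) (fun w hw => hqb w ((hqs w).2 (Or.inr hw)))
      (fun w h1 h2 => by
        rcases hmeet w ((hps w).2 (Or.inr h1)) ((hqs w).2 (Or.inr h2)) with rfl | rfl | rfl
        · exact (hxp h1).elim
        · exact Or.inr rfl
        · exact Or.inl rfl)
    refine ⟨S₁ + S₂, by rw [Multiset.card_add]; omega, ?_, hfin _ ?_⟩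
    · intro E hE
      exact (Multiset.mem_add.1 hE).elim (hS₁ E) (hS₂ E)
    · intro e
      -- Walks whose only common vertex is `z` have no common edge.
      have hcross : ∀ {u v u' v' : V} (r : T.Walk u v) (r' : T.Walk u' v'),
          (∀ w ∈ r.support, w ∈ r'.support → w = z) → e ∈ r.edges → e ∉ r'.edges := by
        intro u v u' v' r r' hr
        induction e with
        | h e₁ e₂ =>
          intro h1 h2
          exact (r.adj_of_mem_edges h1).ne
            ((hr e₁ (r.fst_mem_support_of_mem_edges h1) (r'.fst_mem_support_of_mem_edges h2)).trans
            (hr e₂ (r.snd_mem_support_of_mem_edges h1)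
              (r'.snd_mem_support_of_mem_edges h2)).symm)
      have k1 := hcross p₁ p₂ hpz
      have k2 := hcross q₁ q₂ hqz
      have k3 := hcross p₁ q₂ (fun w h1 h2 => by
        rcases hmeet w ((hps w).2 (Or.inl h1)) ((hqs w).2 (Or.inr h2)) with rfl | rfl | rfl
        · exact (hxq h2).elim
        · exact (hyp h1).elim
        · rfl)
      have k4 := hcross p₂ q₁ (fun w h1 h2 => by
        rcases hmeet w ((hps w).2 (Or.inr h1)) ((hqs w).2 (Or.inl h2)) with rfl | rfl | rfl
        · exact (hxp h1).elim
        · exact (hyq h2).elim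
        · rfl)
      have m1 := hm₁ e
      have m2 := hm₂ e
      have hadd : edgeMult (S₁ + S₂) e = edgeMult S₁ e + edgeMult S₂ e :=
        Multiset.countP_add _ _ _
      simp only [hpe, hqe, hadd]
      clear hm₁ hm₂ hpe hqe hcross hfin hmeet
      by_cases b1 : e ∈ p₁.edges <;> by_cases b2 : e ∈ p₂.edges <;>
      by_cases b3 : e ∈ q₁.edges <;> by_cases b4 : e ∈ q₂.edges <;>
      simp only [b1, b2, b3, b4, or_true, or_false, and_true, and_false,
        and_self, if_true, if_false, not_true_eq_false, not_false_eq_true, forall_const,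
        imp_self] at m1 m2 k1 k2 k3 k4 ⊢ <;> omega
  · obtain ⟨S, hc, hS, hm⟩ := exists_cycle_of_paths hp hq hxy hpa hqb (by
      intro w h1 h2
      rcases hab w (hpa w h1) (hqb w h2) with rfl | rfl | rfl
      · exact Or.inl rfl
      · exact Or.inr rfl
      · exact (hz ⟨h1, h2⟩).elim)
    exact ⟨S, by omega, hS, hfin S hm⟩

/-- A cycle containing the three edges of a triangle has no other edge. -/
theorem IsCycleIn.eq_triangle {V : Type*} {T : SimpleGraph V} {s : Finset V} {E : Set (Sym2 V)}
    (h : IsCycleIn T s E) {x y z : V} (hzx : z ≠ x) (hzy : z ≠ y)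
    (h1 : s(x, y) ∈ E) (h2 : s(x, z) ∈ E) (h3 : s(y, z) ∈ E) :
    ∀ e ∈ E, e = s(x, y) ∨ e = s(x, z) ∨ e = s(y, z) := by
  obtain ⟨p, hp, -, -, hpE⟩ := h.exists_path h1
  have h2' : s(x, z) ∈ p.edges := by
    refine ((hpE _).1 h2).resolve_left fun h => ?_
    rcases Sym2.eq_iff.1 h with h | h
    · exact hzy h.2
    · exact hzx h.2
  have h3' : s(z, y) ∈ p.edges := by
    rw [Sym2.eq_swap]
    refine ((hpE _).1 h3).resolve_left fun h => ?_
    rcases Sym2.eq_iff.1 h with h | h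
    · exact hzy h.2
    · exact hzx h.2
  have hzp : z ∈ p.support := p.snd_mem_support_of_mem_edges h2'
  obtain ⟨p₁, p₂, hp₁, hp₂, hpz, -, hpe⟩ := exists_split hp hzp
  have e1 := edges_eq_of_isPath hp₁ (((hpe _).1 h2').resolve_right fun h =>
    hzx (hpz x p₁.start_mem_support (Walk.fst_mem_support_of_mem_edges _ h)).symm)
  have e2 := edges_eq_of_isPath hp₂ (((hpe _).1 h3').resolve_left fun h =>
    hzy (hpz y (Walk.snd_mem_support_of_mem_edges _ h) p₂.end_mem_support).symm)
  intro e he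
  rcases (hpE e).1 he with he | he
  · exact Or.inl he
  · rw [hpe, e1, e2, List.mem_singleton, List.mem_singleton] at he
    exact Or.inr (he.imp_right fun h => h.trans Sym2.eq_swap)

/-! ### Gluing two covers along a triangle -/

/-- The induced subgraph `T[s]` has a cycle double cover with at most `n` members. -/
def HasCover {V : Type*} (T : SimpleGraph V) (s : Finset V) (n : ℕ) : Prop :=
  ∃ S : Multiset (Set (Sym2 V)), S.card ≤ n ∧ (∀ E ∈ S, IsCycleIn T s E) ∧
    ∀ u ∈ s, ∀ v ∈ s, T.Adj u v → edgeMult S s(u, v) = 2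

theorem edgeMult_add {V : Type*} (S R : Multiset (Set (Sym2 V))) (e : Sym2 V) :
    edgeMult (S + R) e = edgeMult S e + edgeMult R e :=
  Multiset.countP_add _ _ _

theorem edgeMult_cons {V : Type*} (C : Set (Sym2 V)) (S : Multiset (Set (Sym2 V))) (e : Sym2 V) :
    edgeMult (C ::ₘ S) e = edgeMult S e + if e ∈ C then 1 else 0 :=
  Multiset.countP_cons _ _ _

/-- Each pair in `Z` is replaced by at most two cycles covering its symmetric difference. -/
theorem merge_pairs {V : Type*} {T : SimpleGraph V} {a b : Finset V} {x y z : V}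
    (hxy : x ≠ y) (hxz : x ≠ z) (hyz : y ≠ z)
    (hab : ∀ w ∈ a, w ∈ b → w = x ∨ w = y ∨ w = z)
    (Z : List (Set (Sym2 V) × Set (Sym2 V)))
    (hZ : ∀ c ∈ Z, IsCycleIn T a c.1 ∧ IsCycleIn T b c.2 ∧
      (s(x, y) ∈ c.1 ∧ s(x, y) ∈ c.2 ∨ s(x, z) ∈ c.1 ∧ s(x, z) ∈ c.2 ∨
        s(y, z) ∈ c.1 ∧ s(y, z) ∈ c.2)) :
    ∃ S : Multiset (Set (Sym2 V)), S.card ≤ 2 * Z.length ∧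
      (∀ E ∈ S, IsCycleIn T (a ∪ b) E) ∧
      ∀ e, edgeMult S e + 2 * Z.countP (fun c => e ∈ c.1 ∧ e ∈ c.2) =
        edgeMult (Z.map Prod.fst : List _) e + edgeMult (Z.map Prod.snd : List _) e := by
  induction Z with
  | nil => exact ⟨0, by simp, by simp, by simp [edgeMult]⟩
  | cons c Z ih =>
    obtain ⟨S, hcard, hS, hm⟩ := ih fun c' hc' => hZ c' (List.mem_cons_of_mem _ hc')
    obtain ⟨h1, h2, hshare⟩ := hZ c List.mem_cons_self
    have hnew : ∃ R : Multiset (Set (Sym2 V)), R.card ≤ 2 ∧ (∀ E ∈ R, IsCycleIn T (a ∪ b) E) ∧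
        ∀ e, edgeMult R e + 2 * (if e ∈ c.1 ∧ e ∈ c.2 then 1 else 0) =
          (if e ∈ c.1 then 1 else 0) + (if e ∈ c.2 then 1 else 0) := by
      rcases hshare with h | h | h
      · exact exists_cycles_of_share h1 h2 hab hxz.symm hyz.symm h.1 h.2
      · exact exists_cycles_of_share h1 h2 (fun w ha hb => by have := hab w ha hb; tauto)
          hxy.symm hyz h.1 h.2
      · exact exists_cycles_of_share h1 h2 (fun w ha hb => by have := hab w ha hb; tauto)
          hxy hxz h.1 h.2
    obtain ⟨R, hRcard, hR, hRm⟩ := hnew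
    refine ⟨S + R, ?_, ?_, ?_⟩
    · rw [Multiset.card_add, List.length_cons]
      omega
    · intro E hE
      exact (Multiset.mem_add.1 hE).elim (hS E) (hR E)
    · intro e
      have m1 := hm e
      have m2 := hRm e
      rw [List.map_cons, List.map_cons, ← Multiset.cons_coe, ← Multiset.cons_coe, edgeMult_cons,
        edgeMult_cons, edgeMult_add, List.countP_cons]
      simp only [decide_eq_true_eq]
      omega

/-- Bookkeeping for the gluing: cycles that cover each edge as often as `A + B`, less two for each
edge of the common triangle, double cover `T[a ∪ b]`. Here `k` is the indicator of the triangle. -/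
theorem HasCover.of_identity {V : Type*} {T : SimpleGraph V} {a b : Finset V} {n : ℕ}
    {A B S : Multiset (Set (Sym2 V))} (k : Sym2 V → ℕ)
    (hsep : ∀ u ∈ a, ∀ v ∈ b, T.Adj u v → u ∈ b ∨ v ∈ a)
    (hA : ∀ E ∈ A, IsCycleIn T a E) (hB : ∀ E ∈ B, IsCycleIn T b E)
    (hA2 : ∀ u ∈ a, ∀ v ∈ a, T.Adj u v → edgeMult A s(u, v) = 2)
    (hB2 : ∀ u ∈ b, ∀ v ∈ b, T.Adj u v → edgeMult B s(u, v) = 2)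
    (hcard : S.card ≤ n) (hS : ∀ E ∈ S, IsCycleIn T (a ∪ b) E)
    (hm : ∀ e, edgeMult S e + 2 * k e = edgeMult A e + edgeMult B e)
    (hk1 : ∀ u ∈ a ∩ b, ∀ v ∈ a ∩ b, u ≠ v → k s(u, v) = 1)
    (hk0 : ∀ e, k e ≠ 0 → ∀ v ∈ e, v ∈ a ∩ b) : HasCover T (a ∪ b) n := by
  refine ⟨S, hcard, hS, ?_⟩
  have hzero : ∀ (R : Multiset (Set (Sym2 V))) (c : Finset V), (∀ E ∈ R, IsCycleIn T c E) →
      ∀ e : Sym2 V, (∃ v ∈ e, v ∉ c) → edgeMult R e = 0 := by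
    rintro R c hR e ⟨v, hve, hvc⟩
    rw [edgeMult, Multiset.countP_eq_zero]
    exact fun E hE he => hvc ((hR E hE).mem_of_mem he hve)
  have hk : ∀ e : Sym2 V, (∃ v ∈ e, v ∉ a ∩ b) → k e = 0 := by
    rintro e ⟨v, hve, hv⟩
    by_contra h
    exact hv (hk0 e h v hve)
  intro u hu v hv huv
  have hmuv := hm s(u, v)
  have huv' : (u ∈ a ∧ v ∈ a) ∨ (u ∈ b ∧ v ∈ b) := by
    rw [Finset.mem_union] at hu hv
    have h1 := fun h h' => hsep u h v h' huv
    have h2 := fun h h' => hsep v h u h' huv.symm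
    tauto
  by_cases ha : u ∈ a ∧ v ∈ a <;> by_cases hb : u ∈ b ∧ v ∈ b
  · have := hk1 u (Finset.mem_inter.2 ⟨ha.1, hb.1⟩) v (Finset.mem_inter.2 ⟨ha.2, hb.2⟩) huv.ne
    rw [hA2 u ha.1 v ha.2 huv, hB2 u hb.1 v hb.2 huv] at hmuv
    omega
  · have hout : ∃ w ∈ s(u, v), w ∉ b := by
      by_contra! h
      exact hb ⟨h u (by simp), h v (by simp)⟩
    have h1 := hzero B b hB _ hout
    have h2 := hk s(u, v) (hout.imp fun w hw => ⟨hw.1, fun h => hw.2 (Finset.mem_inter.1 h).2⟩)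
    have h3 := hA2 u ha.1 v ha.2 huv
    omega
  · have hout : ∃ w ∈ s(u, v), w ∉ a := by
      by_contra! h
      exact ha ⟨h u (by simp), h v (by simp)⟩
    have h1 := hzero A a hA _ hout
    have h2 := hk s(u, v) (hout.imp fun w hw => ⟨hw.1, fun h => hw.2 (Finset.mem_inter.1 h).1⟩)
    have h3 := hB2 u hb.1 v hb.2 huv
    omega
  · tauto

/-- Two members containing all three edges of the triangle are both equal to it, so dropping them
lowers the multiplicity of exactly those three edges by two. -/
theorem exists_drop_triangles {V : Type*} {T : SimpleGraph V} {a : Finset V} {x y z : V}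
    (hxz : x ≠ z) (hyz : y ≠ z) {A : Multiset (Set (Sym2 V))} (hA : ∀ E ∈ A, IsCycleIn T a E)
    (h : 2 ≤ A.countP fun E => s(x, y) ∈ E ∧ s(x, z) ∈ E ∧ s(y, z) ∈ E) :
    ∃ A' : Multiset (Set (Sym2 V)), A' ≤ A ∧ ∀ e, edgeMult A' e +
      2 * (if e = s(x, y) ∨ e = s(x, z) ∨ e = s(y, z) then 1 else 0) = edgeMult A e := by
  have htri : ∀ E ∈ A, (s(x, y) ∈ E ∧ s(x, z) ∈ E ∧ s(y, z) ∈ E) →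
      ∀ e, e ∈ E ↔ (e = s(x, y) ∨ e = s(x, z) ∨ e = s(y, z)) := by
    intro E hE hmem e
    refine ⟨(hA E hE).eq_triangle hxz.symm hyz.symm hmem.1 hmem.2.1 hmem.2.2 e, ?_⟩
    rintro (rfl | rfl | rfl)
    exacts [hmem.1, hmem.2.1, hmem.2.2]
  obtain ⟨C, hCA, hC⟩ := Multiset.countP_pos.1 (lt_of_lt_of_le Nat.zero_lt_two h)
  obtain ⟨A₁, rfl⟩ := Multiset.exists_cons_of_mem hCA
  rw [Multiset.countP_cons, if_pos hC] at h
  obtain ⟨D, hDA, hD⟩ := Multiset.countP_pos.1 (Nat.lt_of_succ_lt_succ h)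
  obtain ⟨A₂, rfl⟩ := Multiset.exists_cons_of_mem hDA
  refine ⟨A₂, (Multiset.le_cons_self _ _).trans (Multiset.le_cons_self _ _), fun e => ?_⟩
  have h1 := htri C hCA hC e
  have h2 := htri D (Multiset.mem_cons_of_mem hDA) hD e
  rw [edgeMult_cons, edgeMult_cons]
  simp only [h1, h2]
  omega

/-- Double covers with `m` and `n` members of two graphs glued along a triangle give one with at most
`m + n` members of their union. -/
theorem HasCover.union {V : Type*} {T : SimpleGraph V} {a b : Finset V} {m n : ℕ}
    (hcard : (a ∩ b).card = 3) (hclique : ∀ u ∈ a ∩ b, ∀ v ∈ a ∩ b, u ≠ v → T.Adj u v)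
    (hsep : ∀ u ∈ a, ∀ v ∈ b, T.Adj u v → u ∈ b ∨ v ∈ a)
    (ha : HasCover T a m) (hb : HasCover T b n) : HasCover T (a ∪ b) (m + n) := by
  obtain ⟨x, y, z, hxy, hxz, hyz, htri⟩ := Finset.card_eq_three.1 hcard
  obtain ⟨A, hAcard, hA, hA2⟩ := ha
  obtain ⟨B, hBcard, hB, hB2⟩ := hb
  have hx : x ∈ a ∩ b := by simp [htri]
  have hy : y ∈ a ∩ b := by simp [htri]
  have hz : z ∈ a ∩ b := by simp [htri]
  have hab : ∀ w ∈ a, w ∈ b → w = x ∨ w = y ∨ w = z := by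
    intro w h1 h2
    simpa [htri] using Finset.mem_inter.2 ⟨h1, h2⟩
  have hedges : ∀ u ∈ a ∩ b, ∀ v ∈ a ∩ b, u ≠ v →
      s(u, v) = s(x, y) ∨ s(u, v) = s(x, z) ∨ s(u, v) = s(y, z) := by
    intro u hu v hv huv
    rw [htri] at hu hv
    simp only [Finset.mem_insert, Finset.mem_singleton] at hu hv
    rcases hu with rfl | rfl | rfl <;> rcases hv with rfl | rfl | rfl <;> simp_all
  have hA' : ∀ E ∈ A, IsCycleIn T (a ∪ b) E := fun E hE => (hA E hE).mono Finset.subset_union_left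
  have hB' : ∀ E ∈ B, IsCycleIn T (a ∪ b) E := fun E hE => (hB E hE).mono Finset.subset_union_right
  have htriangle : ∀ e : Sym2 V, (e = s(x, y) ∨ e = s(x, z) ∨ e = s(y, z)) →
      ∀ v ∈ e, v ∈ a ∩ b := by
    rintro e (rfl | rfl | rfl) v hv <;> rcases Sym2.mem_iff.1 hv with rfl | rfl <;> assumption
  by_cases hAt : 2 ≤ A.countP fun E => s(x, y) ∈ E ∧ s(x, z) ∈ E ∧ s(y, z) ∈ E
  · obtain ⟨A', hle, hm⟩ := exists_drop_triangles hxz hyz hA hAt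
    refine HasCover.of_identity (S := A' + B) _ hsep hA hB hA2 hB2 ?_ ?_
      (fun e => by rw [← hm e, edgeMult_add]; exact Nat.add_right_comm _ _ _) ?_ ?_
    · rw [Multiset.card_add]
      exact Nat.add_le_add ((Multiset.card_le_card hle).trans hAcard) hBcard
    · intro E hE
      exact (Multiset.mem_add.1 hE).elim (fun h => hA' E (Multiset.mem_of_le hle h)) (hB' E)
    · intro u hu v hv huv
      exact if_pos (hedges u hu v hv huv)
    · intro e he
      exact htriangle e (by by_contra h; exact he (if_neg h))
  by_cases hBt : 2 ≤ B.countP fun E => s(x, y) ∈ E ∧ s(x, z) ∈ E ∧ s(y, z) ∈ E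
  · obtain ⟨B', hle, hm⟩ := exists_drop_triangles hxz hyz hB hBt
    refine HasCover.of_identity (S := A + B') _ hsep hA hB hA2 hB2 ?_ ?_
      (fun e => by rw [← hm e, edgeMult_add]; exact Nat.add_assoc _ _ _) ?_ ?_
    · rw [Multiset.card_add]
      exact Nat.add_le_add hAcard ((Multiset.card_le_card hle).trans hBcard)
    · intro E hE
      exact (Multiset.mem_add.1 hE).elim (hA' E) (fun h => hB' E (Multiset.mem_of_le hle h))
    · intro u hu v hv huv
      exact if_pos (hedges u hu v hv huv)
    · intro e he
      exact htriangle e (by by_contra h; exact he (if_neg h))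
  have hmA : ∀ u ∈ a ∩ b, ∀ v ∈ a ∩ b, u ≠ v → edgeMult A s(u, v) = 2 := fun u hu v hv huv =>
    hA2 u (Finset.mem_inter.1 hu).1 v (Finset.mem_inter.1 hv).1 (hclique u hu v hv huv)
  have hmB : ∀ u ∈ a ∩ b, ∀ v ∈ a ∩ b, u ≠ v → edgeMult B s(u, v) = 2 := fun u hu v hv huv =>
    hB2 u (Finset.mem_inter.1 hu).2 v (Finset.mem_inter.1 hv).2 (hclique u hu v hv huv)
  obtain ⟨Z, A', B', hZA, hZB, hk1, hk2, hk3, hshare⟩ :=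
    exists_pairing (fun E => s(x, y) ∈ E) (fun E => s(x, z) ∈ E) (fun E => s(y, z) ∈ E) A B
      (hmA x hx y hy hxy) (hmA x hx z hz hxz) (hmA y hy z hz hyz)
      (hmB x hx y hy hxy) (hmB x hx z hz hxz) (hmB y hy z hz hyz)
      (not_le.1 hAt) (not_le.1 hBt)
  have hZ : ∀ c ∈ Z, IsCycleIn T a c.1 ∧ IsCycleIn T b c.2 := by
    intro c hc
    refine ⟨hA _ ?_, hB _ ?_⟩
    · rw [hZA, Multiset.mem_add]
      exact Or.inl (List.mem_map_of_mem hc)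
    · rw [hZB, Multiset.mem_add]
      exact Or.inl (List.mem_map_of_mem hc)
  obtain ⟨S, hScard, hS, hSm⟩ := merge_pairs hxy hxz hyz hab Z
    (fun c hc => ⟨(hZ c hc).1, (hZ c hc).2, hshare c hc⟩)
  refine HasCover.of_identity (S := S + (A' + B')) (fun e => Z.countP fun c => e ∈ c.1 ∧ e ∈ c.2)
    hsep hA hB hA2 hB2 ?_ ?_ ?_ ?_ ?_
  · have h1 := congrArg Multiset.card hZA
    have h2 := congrArg Multiset.card hZB
    simp only [Multiset.card_add, Multiset.coe_card, List.length_map] at h1 h2 ⊢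
    omega
  · intro E hE
    rw [Multiset.mem_add, Multiset.mem_add] at hE
    rcases hE with hE | hE | hE
    · exact hS E hE
    · exact hA' E (by rw [hZA, Multiset.mem_add]; exact Or.inr hE)
    · exact hB' E (by rw [hZB, Multiset.mem_add]; exact Or.inr hE)
  · intro e
    have := hSm e
    conv_rhs => rw [hZA, hZB]
    simp only [edgeMult_add]
    omega
  · intro u hu v hv huv
    rcases hedges u hu v hv huv with h | h | h <;> rw [h] <;> assumption
  · intro e he v hv
    obtain ⟨c, hc, hec⟩ := List.countP_pos_iff.1 (Nat.pos_of_ne_zero he)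
    rw [decide_eq_true_iff] at hec
    exact Finset.mem_inter.2 ⟨(hZ c hc).1.mem_of_mem hec.1 hv, (hZ c hc).2.mem_of_mem hec.2 hv⟩

/-! ### Cycle double covers as multisets of edge sets -/

/-- A connected 2-regular subgraph of `T[s]` is traversed by a closed walk that is a cycle. -/
theorem IsCycleSubgraph.isCycleIn {V : Type*} [Finite V] {T : SimpleGraph V} {s : Finset V}
    {C : (T.induce (s : Set V)).Subgraph} (hC : IsCycleSubgraph C) :
    IsCycleIn T s (Sym2.map Subtype.val '' C.edgeSet) := by
  obtain ⟨hconn, hdeg⟩ := hC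
  have hcyc : C.spanningCoe.IsCycles := by
    rintro v ⟨w, hw⟩
    exact hdeg v (C.edge_vert hw)
  obtain ⟨⟨v, hv⟩⟩ := hconn.nonempty
  have hne : (C.spanningCoe.neighborSet v).Nonempty := by
    apply Set.nonempty_of_ncard_ne_zero
    have := hdeg v hv
    change (C.neighborSet v).ncard ≠ 0
    omega
  obtain ⟨p, hp, hpv⟩ := hcyc.exists_cycle_toSubgraph_verts_eq_connectedComponentSupp
    (c := C.spanningCoe.connectedComponentMk v) rfl hne
  have hmem : ∀ w ∈ C.verts, w ∈ p.toSubgraph.verts := by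
    intro w hw
    rw [hpv]
    have hr := (hconn.preconnected ⟨w, hw⟩ ⟨v, hv⟩).map
      (⟨Subtype.val, fun h => h⟩ : C.coe →g C.spanningCoe)
    exact ConnectedComponent.sound hr
  have hedge : ∀ e, e ∈ C.edgeSet ↔ e ∈ p.edges := by
    intro e
    induction e with
    | h u w =>
      rw [← Walk.mem_edges_toSubgraph, Subgraph.mem_edgeSet, Subgraph.mem_edgeSet]
      refine ⟨fun h => ?_, fun h => h.adj_sub⟩
      have : C.spanningCoe.LocallyFinite := fun _ => Fintype.ofFinite _
      exact (hp.adj_toSubgraph_iff_of_isCycles hcyc (hmem u (C.edge_vert h)) w).2 h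
  let f : C.spanningCoe →g T := ⟨Subtype.val, fun {u w} h => C.adj_sub h⟩
  refine ⟨_, p.map f, hp.map Subtype.val_injective, ?_, ?_⟩
  · intro w hw
    rw [Walk.support_map] at hw
    obtain ⟨w', -, rfl⟩ := List.mem_map.1 hw
    exact w'.2
  · ext e
    simp only [Set.mem_image, hedge, Walk.edges_map, Set.mem_ofPred_eq, List.mem_map]
    rfl

theorem IsCycleIn.exists_subgraph {V : Type*} {T : SimpleGraph V} {s : Finset V}
    {E : Set (Sym2 V)} (h : IsCycleIn T s E) :
    ∃ C : T.Subgraph, IsCycleSubgraph C ∧ C.edgeSet = E := by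
  obtain ⟨u, p, hp, -, rfl⟩ := h
  refine ⟨p.toSubgraph, ⟨p.toSubgraph_connected.coe, fun v hv => ?_⟩, ?_⟩
  · exact hp.ncard_neighborSet_toSubgraph_eq_two (p.mem_verts_toSubgraph.1 hv)
  · ext e
    exact p.mem_edges_toSubgraph

theorem hasCover_of_cdcMin_le {V : Type*} [Finite V] {T : SimpleGraph V} {s : Finset V} {n : ℕ}
    (h : cdcMin (T.induce (s : Set V)) ≤ n) : HasCover T s n := by
  have hne : {n : ℕ∞ | ∃ S : Multiset (T.induce (s : Set V)).Subgraph,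
      IsCDC (T.induce (s : Set V)) S ∧ (Multiset.card S : ℕ∞) = n}.Nonempty := by
    by_contra hcon
    rw [cdcMin, Set.not_nonempty_iff_eq_empty.1 hcon, sInf_empty] at h
    exact ENat.natCast_ne_top n (top_le_iff.1 h)
  obtain ⟨S, ⟨hcyc, hcov⟩, hcard⟩ := csInf_mem hne
  refine ⟨S.map fun C => Sym2.map Subtype.val '' C.edgeSet, ?_, ?_, ?_⟩
  · rw [Multiset.card_map]
    have : (Multiset.card S : ℕ∞) ≤ n := hcard.trans_le h
    exact_mod_cast this
  · intro E hE
    obtain ⟨C, hC, rfl⟩ := Multiset.mem_map.1 hE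
    exact (hcyc C hC).isCycleIn
  · intro u hu v hv huv
    have h2 := hcov s(⟨u, hu⟩, ⟨v, hv⟩) huv
    rw [edgeMult, Multiset.countP_map, ← Multiset.countP_eq_card_filter, ← h2]
    apply Multiset.countP_congr rfl
    intro C _
    have : s(u, v) = Sym2.map Subtype.val s((⟨u, hu⟩ : (s : Set V)), (⟨v, hv⟩ : (s : Set V))) := rfl
    rw [this, (Sym2.map.injective Subtype.val_injective).mem_set_image]

theorem cdcMin_le_of_hasCover {V : Type*} [Fintype V] {T : SimpleGraph V} {n : ℕ}
    (h : HasCover T Finset.univ n) : cdcMin T ≤ n := by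
  obtain ⟨S, hcard, hcyc, hcov⟩ := h
  choose! f hf using fun (E : Set (Sym2 V)) (hE : IsCycleIn T Finset.univ E) => hE.exists_subgraph
  refine le_trans (sInf_le ⟨S.map f, ⟨?_, ?_⟩, rfl⟩) ?_
  · intro C hC
    obtain ⟨E, hE, rfl⟩ := Multiset.mem_map.1 hC
    exact (hf E (hcyc E hE)).1
  · intro e
    induction e with
    | h u v =>
      intro he
      rw [Multiset.countP_map, ← Multiset.countP_eq_card_filter,
        ← hcov u (Finset.mem_univ u) v (Finset.mem_univ v) he, edgeMult]
      apply Multiset.countP_congr rfl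
      intro E hE
      rw [(hf E (hcyc E hE)).2]
  · rw [Multiset.card_map]
    exact_mod_cast hcard

theorem IsPieceDecomp.hasCover {V : Type*} [Finite V] {T : SimpleGraph V} {s : Finset V}
    {P : Multiset (Finset V)} (hP : IsPieceDecomp T s P) :
    ∀ n : ℕ, (P.map fun s : Finset V => cdcMin (T.induce (s : Set V))).sum ≤ n → HasCover T s n := by
  induction hP with
  | base s _ =>
    intro n hn
    rw [Multiset.map_singleton, Multiset.sum_singleton] at hn
    exact hasCover_of_cdcMin_le hn
  | split s a b P Q hs _ _ hcard hclique hsep _ _ ihP ihQ =>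
    intro n hn
    rw [Multiset.map_add, Multiset.sum_add] at hn
    have hne : ∀ x y : ℕ∞, x + y ≤ n → ∃ k l : ℕ, x = k ∧ y = l ∧ k + l ≤ n := by
      intro x y hxy
      have htop : x + y ≠ ⊤ := ne_top_of_le_ne_top (ENat.natCast_ne_top n) hxy
      obtain ⟨k, hk⟩ := ENat.ne_top_iff_exists.1 (fun h : x = ⊤ => htop (by simp [h]))
      obtain ⟨l, hl⟩ := ENat.ne_top_iff_exists.1 (fun h : y = ⊤ => htop (by simp [h]))
      subst hk hl
      exact ⟨k, l, rfl, rfl, by exact_mod_cast hxy⟩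
    obtain ⟨k, l, hk, hl, hkl⟩ := hne _ _ hn
    obtain ⟨S, h1, h2, h3⟩ :=
      HasCover.union hcard hclique hsep (ihP k hk.le) (ihQ l hl.le)
    rw [← hs]
    exact ⟨S, h1.trans hkl, by convert h2, by convert h3⟩

/-- For a plane triangulation `T` with decomposition-tree pieces `𝒫(T)`,
`c(T) ≤ Σ_{G ∈ 𝒫(T)} c(G)`. -/
theorem statement_11 {V : Type*} [Fintype V] (T : SimpleGraph V)
    (hT : IsTriangulation T)
    (P : Multiset (Finset V)) (hP : IsPieceDecomp T Finset.univ P) :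
    cdcMin T ≤ (P.map fun s => cdcMin (T.induce (s : Set V))).sum := by
  -- In the statement `P` is first mapped to a multiset of sets, by means of the monad structure.
  have hmap : (P.map fun s => cdcMin (T.induce (s : Set V))) =
      P.map fun s : Finset V => cdcMin (T.induce (s : Set V)) := by
    simp only [Multiset.bind_def, Multiset.pure_def, Multiset.bind_singleton, Multiset.map_map,
      Function.comp_def]
  rw [hmap]
  rcases eq_or_ne (P.map fun s : Finset V => cdcMin (T.induce (s : Set V))).sum ⊤ with h | h
  · rw [h]
    exact le_top
  · obtain ⟨n, hn⟩ := ENat.ne_top_iff_exists.1 h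
    rw [← hn]
    exact cdcMin_le_of_hasCover (hP.hasCover n hn.ge)
end
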